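/- (Blow-up Lemma) There exists a constant c_p > 0 depending only on p such that if the initial curvature satisfies ψ̂(0) ≥ c_p·‖ψ‖₂, then there exist constants c, c' > 0 such that c/(T−t) ≤ k̂(0,t)^{p+1} ≤ c'/(T−t) for all t ∈ [0,T). -/

import Mathlib

open Real MeasureTheory Filter Set

/-- The `n`-th Fourier coefficient of a `2π`-periodic function `f : ℝ → ℝ`:
`f̂(n) = (1/2π) ∫₀^{2π} f(θ) e^{-inθ} dθ`. -/
noncomputable def fCoeff (f : ℝ → ℝ) (n : ℤ) : ℂ :=
  (1 / (2 * Real.pi)) * ∫ θ in (0:ℝ)..(2 * Real.pi),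
    (f θ : ℂ) * Complex.exp (-(Complex.I * n * θ))

/-- The seminorm `‖f‖₂ = max{sup_n n²|Re f̂(n)|, sup_n n²|Im f̂(n)|}`. -/
noncomputable def seminorm2 (f : ℝ → ℝ) : ℝ :=
  max (⨆ n : ℤ, (n : ℝ)^2 * |(fCoeff f n).re|)
      (⨆ n : ℤ, (n : ℝ)^2 * |(fCoeff f n).im|)

/-- The `C^l[0,2π]` norm: `max_{0 ≤ j ≤ l} sup_{θ ∈ [0,2π]} |f^{(j)}(θ)|`. -/
noncomputable def ClNorm (l : ℕ) (f : ℝ → ℝ) : ℝ :=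
  ⨆ j : Fin (l + 1), ⨆ θ : Set.Icc (0:ℝ) (2 * Real.pi),
    |iteratedDeriv (j : ℕ) f (θ : ℝ)|

/-- `k : ℝ × [0,T) → ℝ` is a smooth, `2π`-periodic (in space), strictly positive solution of the
`p`-curve shortening equation
`∂k/∂t = k²(k^{p-1} ∂²k/∂θ² + (p-1) k^{p-2} (∂k/∂θ)² + (1/p) k^p)`
with initial datum `ψ` (smooth, strictly positive, `2π`-periodic), blow-up time `T`
(i.e. `sup_θ k(θ,t) → ∞` as `t → T⁻`), such that `k(·,t)` is the curvature of a simple closed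
convex curve for each `t`, i.e. `∫₀^{2π} e^{iθ}/k(θ,t) dθ = 0`. -/
def IsPCSF (p : ℕ) (T : ℝ) (k : ℝ → ℝ → ℝ) (ψ : ℝ → ℝ) : Prop :=
  ContDiffOn ℝ (⊤ : ℕ∞) (fun q : ℝ × ℝ => k q.1 q.2) (Set.univ ×ˢ Set.Ico 0 T) ∧
  (∀ θ t, k (θ + 2 * Real.pi) t = k θ t) ∧
  (∀ θ : ℝ, ∀ t ∈ Set.Ico (0:ℝ) T, 0 < k θ t) ∧
  (∀ θ : ℝ, ∀ t ∈ Set.Ico (0:ℝ) T,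
    HasDerivAt (fun s => k θ s)
      ((k θ t)^2 * ((k θ t)^(p - 1) * deriv (deriv (fun x => k x t)) θ
        + ((p : ℝ) - 1) * (k θ t)^(p - 2) * (deriv (fun x => k x t) θ)^2
        + (1 / (p : ℝ)) * (k θ t)^p)) t) ∧
  (∀ θ, k θ 0 = ψ θ) ∧
  ContDiff ℝ (⊤ : ℕ∞) ψ ∧ (∀ θ, 0 < ψ θ) ∧ (∀ θ, ψ (θ + 2 * Real.pi) = ψ θ) ∧
  Filter.Tendsto (fun t => ⨆ θ : Set.Icc (0:ℝ) (2 * Real.pi), k (θ : ℝ) t)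
    (nhdsWithin T (Set.Iio T)) Filter.atTop ∧
  (∀ t ∈ Set.Ico (0:ℝ) T,
    (∫ θ in (0:ℝ)..(2 * Real.pi), Complex.exp (Complex.I * θ) / (k θ t)) = 0)

/-- The original time `t` corresponding to the rescaled time `τ`:
`t = T(1 - e^{-(p+1)τ})`, i.e. `τ = -(1/(p+1))·log(1 - t/T)`. -/
noncomputable def tOf (p : ℕ) (T τ : ℝ) : ℝ := T * (1 - Real.exp (-((p : ℝ) + 1) * τ))

/-- The normalized curvature `k̃(θ,τ) = ((p+1)/p)^{1/(p+1)} (T-t)^{1/(p+1)} k(θ,t)`,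
with `t = T(1 - e^{-(p+1)τ})`. -/
noncomputable def ktilde (p : ℕ) (T : ℝ) (k : ℝ → ℝ → ℝ) (θ τ : ℝ) : ℝ :=
  (((p : ℝ) + 1) / (p : ℝ)) ^ ((1 : ℝ) / ((p : ℝ) + 1))
    * (T - tOf p T τ) ^ ((1 : ℝ) / ((p : ℝ) + 1)) * k θ (tOf p T τ)

lemma aux_coeff (f : ℝ → ℝ) (n : ℤ) :
    fourierCoeffOn (two_pi_pos) (fun x => (f x : ℂ)) n = fCoeff f n := by
  rw [fourierCoeffOn_eq_integral, fCoeff]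
  have : ∀ x : ℝ, fourier (-n) (x : AddCircle (2 * π - 0)) • (f x : ℂ)
      = (f x : ℂ) * Complex.exp (-(Complex.I * n * x)) := by
    intro x
    rw [fourier_coe_apply, smul_eq_mul, mul_comm]
    congr 2
    have : (π : ℂ) ≠ 0 := by exact_mod_cast pi_ne_zero
    push_cast
    field_simp
    ring
  simp_rw [this]
  rw [Complex.real_smul]
  push_cast
  simp

lemma aux_fCoeff_re_im (f : ℝ → ℝ) (hf : Continuous f) (n : ℤ) :
    fCoeff f n = (1 / (2 * π)) * (((∫ θ in (0:ℝ)..(2 * π), f θ * cos (n * θ) : ℝ) : ℂ)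
      - Complex.I * ((∫ θ in (0:ℝ)..(2 * π), f θ * sin (n * θ) : ℝ) : ℂ)) := by
  rw [fCoeff]
  congr 1
  rw [← intervalIntegral.integral_ofReal, ← intervalIntegral.integral_ofReal,
    ← intervalIntegral.integral_const_mul, ← intervalIntegral.integral_sub]
  · congr 1
    ext θ
    have : -(Complex.I * n * θ) = ((-(n * θ) : ℝ) : ℂ) * Complex.I := by push_cast; ring
    rw [this, Complex.exp_mul_I, ← Complex.ofReal_cos, ← Complex.ofReal_sin, cos_neg, sin_neg]
    push_cast
    ring
  · exact Continuous.intervalIntegrable (by fun_prop) _ _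
  · exact Continuous.intervalIntegrable (by fun_prop) _ _

lemma wirt (f f1 : ℝ → ℝ) (hf : ∀ x, HasDerivAt f (f1 x) x) (hc : Continuous f1)
    (h0 : f 0 = f (2 * π)) (i0 : ∫ θ in (0:ℝ)..(2 * π), f θ = 0)
    (i1 : ∫ θ in (0:ℝ)..(2 * π), f θ * cos θ = 0)
    (i2 : ∫ θ in (0:ℝ)..(2 * π), f θ * sin θ = 0) :
    4 * ∫ θ in (0:ℝ)..(2 * π), f θ ^ 2 ≤ ∫ θ in (0:ℝ)..(2 * π), f1 θ ^ 2 := by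
  have hfc : Continuous f := continuous_iff_continuousAt.2 fun x => (hf x).continuousAt
  have mem : ∀ g : ℝ → ℝ, Continuous g →
      MemLp (fun x => (g x : ℂ)) 2 (volume.restrict (Ioc 0 (2 * π))) := by
    intro g hg
    obtain ⟨C, hC⟩ := isCompact_Icc.exists_bound_of_continuousOn (s := Icc (0:ℝ) (2 * π))
      (f := fun x => (g x : ℂ)) (by fun_prop)
    refine MemLp.of_bound (Continuous.aestronglyMeasurable (by fun_prop)) C ?_
    exact (ae_restrict_iff' measurableSet_Ioc).2
      (ae_of_all _ fun x hx => hC x (Ioc_subset_Icc_self hx))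
  have S := hasSum_sq_fourierCoeffOn two_pi_pos (mem f hfc)
  have S1 := hasSum_sq_fourierCoeffOn two_pi_pos (mem f1 hc)
  have key : ∀ n : ℤ, 4 * ‖fourierCoeffOn two_pi_pos (fun x => (f x : ℂ)) n‖ ^ 2 ≤
      ‖fourierCoeffOn two_pi_pos (fun x => (f1 x : ℂ)) n‖ ^ 2 := by
    intro n
    by_cases hn : n = 0 ∨ n = 1 ∨ n = -1
    · have : fourierCoeffOn two_pi_pos (fun x => (f x : ℂ)) n = 0 := by
        rw [aux_coeff, aux_fCoeff_re_im f hfc]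
        rcases hn with rfl | rfl | rfl <;> simp [i0, i1, i2]
      rw [this]; simp
    · have hn0 : n ≠ 0 := by tauto
      have h := fourierCoeffOn_of_hasDerivAt two_pi_pos (f := fun x => (f x : ℂ))
        (f' := fun x => (f1 x : ℂ)) hn0 (fun x _ => (hf x).ofReal_comp)
        (Continuous.intervalIntegrable (by fun_prop) _ _)
      rw [← h0, sub_self, mul_zero, zero_sub] at h
      have h2 : 2 ≤ |(n:ℝ)| := by
        have : 2 ≤ |n| := by
          rcases abs_cases n with h | h <;> omega
        exact_mod_cast this
      have h3 : ‖fourierCoeffOn two_pi_pos (fun x => (f x : ℂ)) n‖ * |(n:ℝ)| =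
          ‖fourierCoeffOn two_pi_pos (fun x => (f1 x : ℂ)) n‖ := by
        rw [h]
        have hn' : |(n:ℝ)| ≠ 0 := by positivity
        simp [abs_of_pos pi_pos]
        field_simp
      rw [← h3, mul_pow]
      have h4 : 4 ≤ |(n:ℝ)| ^ 2 := by nlinarith
      rw [mul_comm]
      exact mul_le_mul_of_nonneg_left h4 (sq_nonneg _)
  have := hasSum_le key (S.mul_left 4) S1
  simp only [Complex.norm_real, norm_eq_abs, sq_abs, sub_zero, smul_eq_mul] at this
  have hp := two_pi_pos
  have h5 : (2 * π)⁻¹ > 0 := by positivity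
  rw [mul_left_comm] at this
  exact le_of_mul_le_mul_left this h5

lemma cs_aux (g : ℝ → ℝ) (hg : Continuous g) (a b : ℝ) (hab : a ≤ b) :
    (∫ x in a..b, g x) ^ 2 ≤ (b - a) * ∫ x in a..b, g x ^ 2 := by
  rcases hab.eq_or_lt with rfl | hlt
  · simp
  set m := (∫ x in a..b, g x) / (b - a) with hm
  have hba : b - a ≠ 0 := by linarith
  have h0 : 0 ≤ ∫ x in a..b, (g x - m) ^ 2 :=
    intervalIntegral.integral_nonneg hab fun x _ => sq_nonneg _
  have h1 : ∫ x in a..b, (g x - m) ^ 2 =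
      (∫ x in a..b, g x ^ 2) - 2 * m * (∫ x in a..b, g x) + m ^ 2 * (b - a) := by
    have : ∀ x, (g x - m) ^ 2 = g x ^ 2 - 2 * m * g x + m ^ 2 := fun x => by ring
    simp_rw [this]
    rw [intervalIntegral.integral_add, intervalIntegral.integral_sub,
      intervalIntegral.integral_const_mul, intervalIntegral.integral_const, smul_eq_mul]
    · ring
    all_goals exact Continuous.intervalIntegrable (by fun_prop) _ _
  rw [h1] at h0
  have h2 : (∫ x in a..b, g x) = m * (b - a) := by rw [hm]; field_simp
  rw [h2] at h0 ⊢
  have : 0 < b - a := by linarith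
  nlinarith [mul_nonneg this.le h0]

/-- the support function -/
noncomputable def hsup (ρ : ℝ → ℝ) (θ : ℝ) : ℝ :=
  sin θ * (∫ φ in (0:ℝ)..θ, cos φ * ρ φ) - cos θ * (∫ φ in (0:ℝ)..θ, sin φ * ρ φ)

noncomputable def hsup1 (ρ : ℝ → ℝ) (θ : ℝ) : ℝ :=
  cos θ * (∫ φ in (0:ℝ)..θ, cos φ * ρ φ) + sin θ * (∫ φ in (0:ℝ)..θ, sin φ * ρ φ)

lemma hsup_deriv (ρ : ℝ → ℝ) (hρ : Continuous ρ) (x : ℝ) :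
    HasDerivAt (hsup ρ) (hsup1 ρ x) x := by
  have c1 : HasDerivAt (fun θ => ∫ φ in (0:ℝ)..θ, cos φ * ρ φ) (cos x * ρ x) x :=
    (continuous_cos.mul hρ).integral_hasStrictDerivAt 0 x |>.hasDerivAt
  have c2 : HasDerivAt (fun θ => ∫ φ in (0:ℝ)..θ, sin φ * ρ φ) (sin x * ρ x) x :=
    (continuous_sin.mul hρ).integral_hasStrictDerivAt 0 x |>.hasDerivAt
  have := ((hasDerivAt_sin x).mul c1).sub ((hasDerivAt_cos x).mul c2)
  refine this.congr_deriv ?_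
  simp only [hsup1]; ring

lemma hsup1_deriv (ρ : ℝ → ℝ) (hρ : Continuous ρ) (x : ℝ) :
    HasDerivAt (hsup1 ρ) (ρ x - hsup ρ x) x := by
  have c1 : HasDerivAt (fun θ => ∫ φ in (0:ℝ)..θ, cos φ * ρ φ) (cos x * ρ x) x :=
    (continuous_cos.mul hρ).integral_hasStrictDerivAt 0 x |>.hasDerivAt
  have c2 : HasDerivAt (fun θ => ∫ φ in (0:ℝ)..θ, sin φ * ρ φ) (sin x * ρ x) x :=
    (continuous_sin.mul hρ).integral_hasStrictDerivAt 0 x |>.hasDerivAt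
  have := ((hasDerivAt_cos x).mul c1).add ((hasDerivAt_sin x).mul c2)
  refine this.congr_deriv ?_
  simp only [hsup]
  linear_combination (ρ x) * sin_sq_add_cos_sq x

lemma hsup_cont (ρ : ℝ → ℝ) (hρ : Continuous ρ) : Continuous (hsup ρ) :=
  continuous_iff_continuousAt.2 fun x => (hsup_deriv ρ hρ x).continuousAt
lemma hsup1_cont (ρ : ℝ → ℝ) (hρ : Continuous ρ) : Continuous (hsup1 ρ) :=
  continuous_iff_continuousAt.2 fun x => (hsup1_deriv ρ hρ x).continuousAt

/-- integration by parts, periodic boundary values -/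
lemma ibp (u v u' v' : ℝ → ℝ) (hu : ∀ x, HasDerivAt u (u' x) x) (hv : ∀ x, HasDerivAt v (v' x) x)
    (cu : Continuous u') (cv : Continuous v') (bu : u 0 = u (2 * π)) (bv : v 0 = v (2 * π)) :
    ∫ x in (0:ℝ)..(2 * π), u x * v' x = - ∫ x in (0:ℝ)..(2 * π), u' x * v x := by
  rw [intervalIntegral.integral_mul_deriv_eq_deriv_mul (fun x _ => hu x) (fun x _ => hv x)
    (cu.intervalIntegrable _ _) (cv.intervalIntegrable _ _), bu, bv]
  ring

lemma ftc0 (u u' : ℝ → ℝ) (hu : ∀ x, HasDerivAt u (u' x) x) 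
    (cu : Continuous u') (bu : u 0 = u (2 * π)) : ∫ x in (0:ℝ)..(2 * π), u' x = 0 := by
  rw [intervalIntegral.integral_eq_sub_of_hasDerivAt (fun x _ => hu x) (cu.intervalIntegrable _ _),
    bu, sub_self]

noncomputable def Rm (ρ : ℝ → ℝ) : ℝ := (∫ θ in (0:ℝ)..(2 * π), ρ θ) / (2 * π)
noncomputable def En (ρ : ℝ → ℝ) : ℝ :=
  Rm ρ ^ 2 - (∫ θ in (0:ℝ)..(2 * π), hsup ρ θ * ρ θ) / (2 * π)

lemma Rm_int (ρ : ℝ → ℝ) : ∫ θ in (0:ℝ)..(2 * π), ρ θ = 2 * π * Rm ρ := by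
  have := pi_ne_zero
  rw [Rm]; field_simp

lemma exists_f (ρ : ℝ → ℝ) (hρ : Continuous ρ)
    (c1 : ∫ φ in (0:ℝ)..(2 * π), cos φ * ρ φ = 0) (c2 : ∫ φ in (0:ℝ)..(2 * π), sin φ * ρ φ = 0) :
    ∃ f f1 : ℝ → ℝ, (∀ x, HasDerivAt f (f1 x) x) ∧
      (∀ x, HasDerivAt f1 (ρ x - Rm ρ - f x) x) ∧ f 0 = f (2 * π) ∧ f1 0 = f1 (2 * π) ∧
      ∫ θ in (0:ℝ)..(2 * π), f θ = 0 ∧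
      ∫ θ in (0:ℝ)..(2 * π), f θ * cos θ = 0 ∧
      ∫ θ in (0:ℝ)..(2 * π), f θ * sin θ = 0 ∧
      ∫ θ in (0:ℝ)..(2 * π), f θ * ρ θ = - (2 * π * En ρ) := by
  have hpi := pi_ne_zero
  have hc := hsup_cont ρ hρ
  have hc1 := hsup1_cont ρ hρ
  set R := Rm ρ with hR
  set a := (∫ θ in (0:ℝ)..(2 * π), hsup ρ θ * cos θ) / π with ha
  set b := (∫ θ in (0:ℝ)..(2 * π), hsup ρ θ * sin θ) / π with hb
  have ha' : ∫ θ in (0:ℝ)..(2 * π), hsup ρ θ * cos θ = π * a := by rw [ha]; field_simp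
  have hb' : ∫ θ in (0:ℝ)..(2 * π), hsup ρ θ * sin θ = π * b := by rw [hb]; field_simp
  have b0 : hsup ρ 0 = hsup ρ (2 * π) := by simp [hsup, c2]
  have b1 : hsup1 ρ 0 = hsup1 ρ (2 * π) := by simp [hsup1, c1]
  have icos : ∫ θ in (0:ℝ)..(2 * π), cos θ = 0 := by simp
  have isin : ∫ θ in (0:ℝ)..(2 * π), sin θ = 0 := by simp
  have icos2 : ∫ θ in (0:ℝ)..(2 * π), cos θ ^ 2 = π := by
    rw [integral_cos_sq]; simp
  have isin2 : ∫ θ in (0:ℝ)..(2 * π), sin θ ^ 2 = π := by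
    rw [integral_sin_sq]; simp
  have isc : ∫ θ in (0:ℝ)..(2 * π), sin θ * cos θ = 0 := by
    rw [integral_sin_mul_cos₁]; simp
  have i0 : ∫ θ in (0:ℝ)..(2 * π), hsup ρ θ = 2 * π * R := by
    have := ftc0 _ _ (hsup1_deriv ρ hρ) (by fun_prop) b1
    rw [intervalIntegral.integral_sub (hρ.intervalIntegrable _ _) (hc.intervalIntegrable _ _),
      Rm_int] at this
    linarith
  refine ⟨fun x => hsup ρ x - R - a * cos x - b * sin x,
    fun x => hsup1 ρ x + a * sin x - b * cos x, ?_, ?_, ?_, ?_, ?_, ?_, ?_, ?_⟩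
  · intro x
    have := (((hsup_deriv ρ hρ x).sub_const R).sub ((hasDerivAt_cos x).const_mul a)).sub
      ((hasDerivAt_sin x).const_mul b)
    refine this.congr_deriv ?_
    ring
  · intro x
    have := ((hsup1_deriv ρ hρ x).add ((hasDerivAt_sin x).const_mul a)).sub
      ((hasDerivAt_cos x).const_mul b)
    refine this.congr_deriv ?_
    ring
  · simp [b0]
  · simp [b1]
  · rw [intervalIntegral.integral_sub, intervalIntegral.integral_sub, intervalIntegral.integral_sub,
      intervalIntegral.integral_const_mul, intervalIntegral.integral_const_mul, icos, isin, i0,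
      intervalIntegral.integral_const, smul_eq_mul]
    · ring
    all_goals exact Continuous.intervalIntegrable (by fun_prop) _ _
  · have : ∀ x, (hsup ρ x - R - a * cos x - b * sin x) * cos x =
        hsup ρ x * cos x - R * cos x - a * cos x ^ 2 - b * (sin x * cos x) := fun x => by ring
    simp_rw [this]
    rw [intervalIntegral.integral_sub, intervalIntegral.integral_sub, intervalIntegral.integral_sub,
      intervalIntegral.integral_const_mul, intervalIntegral.integral_const_mul,
      intervalIntegral.integral_const_mul, icos, icos2, isc, ha']
    · ring
    all_goals exact Continuous.intervalIntegrable (by fun_prop) _ _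
  · have : ∀ x, (hsup ρ x - R - a * cos x - b * sin x) * sin x =
        hsup ρ x * sin x - R * sin x - a * (sin x * cos x) - b * sin x ^ 2 := fun x => by ring
    simp_rw [this]
    rw [intervalIntegral.integral_sub, intervalIntegral.integral_sub, intervalIntegral.integral_sub,
      intervalIntegral.integral_const_mul, intervalIntegral.integral_const_mul,
      intervalIntegral.integral_const_mul, isin, isin2, isc, hb']
    · ring
    all_goals exact Continuous.intervalIntegrable (by fun_prop) _ _
  · have : ∀ x, (hsup ρ x - R - a * cos x - b * sin x) * ρ x =
        hsup ρ x * ρ x - R * ρ x - a * (cos x * ρ x) - b * (sin x * ρ x) := fun x => by ring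
    simp_rw [this]
    rw [intervalIntegral.integral_sub, intervalIntegral.integral_sub, intervalIntegral.integral_sub,
      intervalIntegral.integral_const_mul, intervalIntegral.integral_const_mul,
      intervalIntegral.integral_const_mul, c1, c2, Rm_int ρ, En, ← hR]
    · field_simp; ring
    all_goals exact Continuous.intervalIntegrable (by fun_prop) _ _

/-- exists zero of a mean-zero function -/
lemma exists_zero_of_mean (f : ℝ → ℝ) (hf : Continuous f)
    (i0 : ∫ θ in (0:ℝ)..(2 * π), f θ = 0) : ∃ z ∈ Icc (0:ℝ) (2 * π), f z = 0 := by
  by_contra! hne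
  have hp := two_pi_pos
  have sgn : (∀ x ∈ Icc (0:ℝ) (2 * π), 0 < f x) ∨ (∀ x ∈ Icc (0:ℝ) (2 * π), f x < 0) := by
    by_contra! h
    obtain ⟨⟨x, hx, hfx⟩, ⟨y, hy, hfy⟩⟩ := h
    have := isPreconnected_Icc.intermediate_value hx hy hf.continuousOn
    obtain ⟨z, hz, hz0⟩ := this ⟨hfx, hfy⟩
    exact hne z hz hz0
  rcases sgn with h | h
  · have := intervalIntegral.intervalIntegral_pos_of_pos_on (hf.intervalIntegrable 0 (2 * π))
      (fun x hx => h x (Ioo_subset_Icc_self hx)) hp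
    linarith
  · have := intervalIntegral.intervalIntegral_pos_of_pos_on (hf.neg.intervalIntegrable 0 (2 * π))
      (fun x hx => neg_pos.2 (h x (Ioo_subset_Icc_self hx))) hp
    simp only [Pi.neg_apply, intervalIntegral.integral_neg] at this
    linarith

lemma osc_bound (f f1 : ℝ → ℝ) (hf : ∀ x, HasDerivAt f (f1 x) x) (hc : Continuous f1)
    (a b : ℝ) (x z : ℝ) (hx : x ∈ Icc a b) (hz : z ∈ Icc a b) :
    (f x - f z) ^ 2 ≤ |x - z| * ∫ θ in a..b, f1 θ ^ 2 := by
  wlog h : z ≤ x generalizing x z with H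
  · have := H z x hz hx (by linarith)
    rw [abs_sub_comm]
    nlinarith
  have e : f x - f z = ∫ θ in z..x, f1 θ := by
    rw [intervalIntegral.integral_eq_sub_of_hasDerivAt (fun x _ => hf x) (hc.intervalIntegrable _ _)]
  rw [e, abs_of_nonneg (by linarith)]
  refine (cs_aux f1 hc z x h).trans ?_
  apply mul_le_mul_of_nonneg_left _ (by linarith)
  apply intervalIntegral.integral_mono_interval hz.1 h hx.2
  · exact ae_of_all _ fun x => sq_nonneg _
  · exact Continuous.intervalIntegrable (by fun_prop) _ _

/-- main static estimate -/
lemma static_f (ρ : ℝ → ℝ) (hρ : Continuous ρ)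
    (c1 : ∫ φ in (0:ℝ)..(2 * π), cos φ * ρ φ = 0) (c2 : ∫ φ in (0:ℝ)..(2 * π), sin φ * ρ φ = 0) :
    ∃ f f1 : ℝ → ℝ, (∀ x, HasDerivAt f (f1 x) x) ∧
      (∀ x, HasDerivAt f1 (ρ x - Rm ρ - f x) x) ∧ f 0 = f (2 * π) ∧ f1 0 = f1 (2 * π) ∧
      ∫ θ in (0:ℝ)..(2 * π), f θ = 0 ∧
      ∫ θ in (0:ℝ)..(2 * π), f θ * ρ θ = - (2 * π * En ρ) ∧
      3 * ∫ θ in (0:ℝ)..(2 * π), f θ ^ 2 ≤ 2 * π * En ρ ∧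
      3 * ∫ θ in (0:ℝ)..(2 * π), f1 θ ^ 2 ≤ 8 * π * En ρ ∧
      ∀ x ∈ Icc (0:ℝ) (2 * π), f x ^ 2 ≤ 54 * En ρ := by
  obtain ⟨f, f1, hf, hf1, p0, p1, i0, i1, i2, i3⟩ := exists_f ρ hρ c1 c2
  have cf : Continuous f := continuous_iff_continuousAt.2 fun x => (hf x).continuousAt
  have cf1 : Continuous f1 := continuous_iff_continuousAt.2 fun x => (hf1 x).continuousAt
  have W := wirt f f1 hf cf1 p0 i0 i1 i2
  have B := ibp f f1 f1 _ hf hf1 cf1 (by fun_prop) p0 p1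
  have e1 : ∫ x in (0:ℝ)..(2 * π), f x * (ρ x - Rm ρ - f x) =
      -(2 * π * En ρ) - ∫ x in (0:ℝ)..(2 * π), f x ^ 2 := by
    have : ∀ x, f x * (ρ x - Rm ρ - f x) = f x * ρ x - Rm ρ * f x - f x ^ 2 := fun x => by ring
    simp_rw [this]
    rw [intervalIntegral.integral_sub, intervalIntegral.integral_sub,
      intervalIntegral.integral_const_mul, i0, i3]
    · ring
    all_goals exact Continuous.intervalIntegrable (by fun_prop) _ _
  have e2 : ∫ x in (0:ℝ)..(2 * π), f1 x * f1 x = ∫ x in (0:ℝ)..(2 * π), f1 x ^ 2 := by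
    simp_rw [sq]
  rw [e1, e2] at B
  have g1 : 3 * ∫ θ in (0:ℝ)..(2 * π), f θ ^ 2 ≤ 2 * π * En ρ := by linarith
  have g2 : 3 * ∫ θ in (0:ℝ)..(2 * π), f1 θ ^ 2 ≤ 8 * π * En ρ := by linarith
  refine ⟨f, f1, hf, hf1, p0, p1, i0, i3, g1, g2, ?_⟩
  intro x hx
  obtain ⟨z, hz, hz0⟩ := exists_zero_of_mean f cf i0
  have o := osc_bound f f1 hf cf1 _ _ x z hx hz
  rw [hz0, sub_zero] at o
  have hd : |x - z| ≤ 2 * π := by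
    rw [abs_le]; constructor <;> linarith [hx.1, hx.2, hz.1, hz.2]
  have n1 : 0 ≤ ∫ θ in (0:ℝ)..(2 * π), f1 θ ^ 2 :=
    intervalIntegral.integral_nonneg two_pi_pos.le fun x _ => sq_nonneg _
  have n2 : 0 ≤ En ρ := by
    have : 0 ≤ 8 * π * En ρ := by linarith
    exact nonneg_of_mul_nonneg_right this (by positivity)
  have q : |x - z| * ∫ θ in (0:ℝ)..(2 * π), f1 θ ^ 2 ≤ 2 * π * (8 * π * En ρ / 3) :=
    mul_le_mul hd (by linarith) n1 two_pi_pos.le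
  have hpi2 : π ^ 2 ≤ 10 := by nlinarith [pi_lt_d2, pi_pos]
  nlinarith [mul_nonneg n2 (sub_nonneg.2 hpi2)]

lemma En_nonneg (ρ : ℝ → ℝ) (hρ : Continuous ρ)
    (c1 : ∫ φ in (0:ℝ)..(2 * π), cos φ * ρ φ = 0) (c2 : ∫ φ in (0:ℝ)..(2 * π), sin φ * ρ φ = 0) :
    0 ≤ En ρ := by
  obtain ⟨f, f1, hf, hf1, p0, p1, i0, i3, g1, g2, hb⟩ := static_f ρ hρ c1 c2
  nlinarith [hb 0 ⟨le_rfl, two_pi_pos.le⟩, sq_nonneg (f 0)]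

/-- `E ≤ mean (ρ-R)²/3`, crude version -/
lemma En_le (ρ : ℝ → ℝ) (hρ : Continuous ρ)
    (c1 : ∫ φ in (0:ℝ)..(2 * π), cos φ * ρ φ = 0) (c2 : ∫ φ in (0:ℝ)..(2 * π), sin φ * ρ φ = 0)
    (d : ℝ) (hd : ∀ x ∈ Icc (0:ℝ) (2 * π), |ρ x - Rm ρ| ≤ d) :
    En ρ ≤ d ^ 2 := by
  obtain ⟨f, f1, hf, hf1, p0, p1, i0, i3, g1, g2, hb⟩ := static_f ρ hρ c1 c2
  have cf : Continuous f := continuous_iff_continuousAt.2 fun x => (hf x).continuousAt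
  have h1 : 0 ≤ ∫ x in (0:ℝ)..(2 * π), (f x + (ρ x - Rm ρ)) ^ 2 :=
    intervalIntegral.integral_nonneg two_pi_pos.le fun x _ => sq_nonneg _
  have e1 : ∫ x in (0:ℝ)..(2 * π), (f x + (ρ x - Rm ρ)) ^ 2 =
      (∫ x in (0:ℝ)..(2 * π), f x ^ 2) + 2 * (- (2 * π * En ρ)) +
       ∫ x in (0:ℝ)..(2 * π), (ρ x - Rm ρ) ^ 2 := by
    have : ∀ x, (f x + (ρ x - Rm ρ)) ^ 2 =
      f x ^ 2 + 2 * (f x * ρ x) - (2 * Rm ρ) * f x + (ρ x - Rm ρ) ^ 2 := fun x => by ring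
    simp_rw [this]
    rw [intervalIntegral.integral_add, intervalIntegral.integral_sub, intervalIntegral.integral_add,
      intervalIntegral.integral_const_mul, intervalIntegral.integral_const_mul, i0, i3]
    · ring
    all_goals exact Continuous.intervalIntegrable (by fun_prop) _ _
  have e2 : ∫ x in (0:ℝ)..(2 * π), (ρ x - Rm ρ) ^ 2 ≤ ∫ x in (0:ℝ)..(2 * π), d ^ 2 := by
    apply intervalIntegral.integral_mono_on two_pi_pos.le
      (Continuous.intervalIntegrable (by fun_prop) _ _)
      (Continuous.intervalIntegrable (by fun_prop) _ _)
    intro x hx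
    have := hd x hx
    rw [← sq_abs]
    gcongr
  rw [intervalIntegral.integral_const, smul_eq_mul, sub_zero] at e2
  have hE := En_nonneg ρ hρ c1 c2
  have : 2 * π * En ρ * (5 / 3) ≤ 2 * π * d ^ 2 := by linarith
  have h3 : En ρ * (5 / 3) ≤ d ^ 2 := by
    have hp := two_pi_pos
    refine le_of_mul_le_mul_left ?_ hp
    linarith
  linarith

/-- Gage inequality near circles -/
lemma gage (ρ : ℝ → ℝ) (hρ : Continuous ρ) (pos : ∀ x, 0 < ρ x)
    (c1 : ∫ φ in (0:ℝ)..(2 * π), cos φ * ρ φ = 0) (c2 : ∫ φ in (0:ℝ)..(2 * π), sin φ * ρ φ = 0)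
    (hE : 1200 * En ρ ≤ Rm ρ ^ 2) (hR : 0 < Rm ρ) :
    Rm ρ ≤ (Rm ρ ^ 2 - En ρ) * Rm (fun x => (ρ x)⁻¹) := by
  obtain ⟨f, f1, hf, hf1, p0, p1, i0, i3, g1, g2, hb⟩ := static_f ρ hρ c1 c2
  have cf : Continuous f := continuous_iff_continuousAt.2 fun x => (hf x).continuousAt
  have cf1 : Continuous f1 := continuous_iff_continuousAt.2 fun x => (hf1 x).continuousAt
  have hE0 := En_nonneg ρ hρ c1 c2
  have ck : Continuous (fun x => (ρ x)⁻¹) := hρ.inv₀ fun x => (pos x).ne'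
  have fb : ∀ x ∈ Icc (0:ℝ) (2 * π), |f x| ≤ 2 / 9 * Rm ρ := by
    intro x hx
    apply abs_le_of_sq_le_sq _ (by positivity)
    nlinarith [hb x hx]
  set R := Rm ρ with hRdef
  set E := En ρ with hEdef
  -- the cubic term
  have B := ibp (fun x => f x ^ 2) f1 (fun x => 2 * f x * f1 x) _
    (fun x => by simpa using (hf x).fun_pow 2) hf1 (by fun_prop) (by fun_prop) (by simp [p0]) p1
  have e1 : ∫ x in (0:ℝ)..(2 * π), f x ^ 2 * ρ x =
      R * (∫ x in (0:ℝ)..(2 * π), f x ^ 2) + (∫ x in (0:ℝ)..(2 * π), f x * (f x ^ 2 - 2 * f1 x ^ 2)) := by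
    have h : ∀ x, f x ^ 2 * ρ x = f x ^ 2 * (ρ x - R - f x) + R * f x ^ 2 + f x ^ 3 := fun x => by ring
    have h' : ∀ x, f x * (f x ^ 2 - 2 * f1 x ^ 2) = f x ^ 3 - 2 * f x * f1 x * f1 x := fun x => by ring
    simp_rw [h, h']
    rw [intervalIntegral.integral_add, intervalIntegral.integral_add, intervalIntegral.integral_sub,
      intervalIntegral.integral_const_mul, B]
    · ring
    all_goals exact Continuous.intervalIntegrable (by fun_prop) _ _
  have e2 : ∫ x in (0:ℝ)..(2 * π), f x * (f x ^ 2 - 2 * f1 x ^ 2) ≤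
      ∫ x in (0:ℝ)..(2 * π), 2 / 9 * R * (f x ^ 2 + 2 * f1 x ^ 2) := by
    apply intervalIntegral.integral_mono_on two_pi_pos.le
      (Continuous.intervalIntegrable (by fun_prop) _ _)
      (Continuous.intervalIntegrable (by fun_prop) _ _)
    intro x hx
    have h := abs_le.1 (fb x hx)
    nlinarith [mul_nonneg (sub_nonneg.2 h.2) (sq_nonneg (f x)),
      mul_nonneg (by linarith [h.1] : 0 ≤ f x + 2 / 9 * R) (sq_nonneg (f1 x))]
  have e3 : ∫ x in (0:ℝ)..(2 * π), 2 / 9 * R * (f x ^ 2 + 2 * f1 x ^ 2) =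
      2 / 9 * R * ((∫ x in (0:ℝ)..(2 * π), f x ^ 2) + 2 * ∫ x in (0:ℝ)..(2 * π), f1 x ^ 2) := by
    rw [intervalIntegral.integral_const_mul, intervalIntegral.integral_add,
      intervalIntegral.integral_const_mul]
    all_goals exact Continuous.intervalIntegrable (by fun_prop) _ _
  have M : ∫ x in (0:ℝ)..(2 * π), f x ^ 2 * ρ x ≤ 2 * π * (R * E) := by
    rw [e1]
    nlinarith [mul_le_mul_of_nonneg_left g1 hR.le, mul_le_mul_of_nonneg_left g2 hR.le]
  set S := R ^ 2 - E with hS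
  have Spos : 0 < S := by nlinarith
  have h0 : 0 ≤ ∫ x in (0:ℝ)..(2 * π), (ρ x)⁻¹ * (S - (R + f x) * ρ x) ^ 2 :=
    intervalIntegral.integral_nonneg two_pi_pos.le fun x _ =>
      mul_nonneg (inv_nonneg.2 (pos x).le) (sq_nonneg _)
  have e4 : ∫ x in (0:ℝ)..(2 * π), (ρ x)⁻¹ * (S - (R + f x) * ρ x) ^ 2 =
      S ^ 2 * (2 * π * Rm (fun x => (ρ x)⁻¹)) - 2 * S * (2 * π * R) + (R ^ 2 * (2 * π * R)
       + 2 * R * (- (2 * π * E)) + ∫ x in (0:ℝ)..(2 * π), f x ^ 2 * ρ x) := by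
    have h : ∀ x, (ρ x)⁻¹ * (S - (R + f x) * ρ x) ^ 2 =
       S ^ 2 * (ρ x)⁻¹ - (2 * S * R) - (2 * S) * f x + R ^ 2 * ρ x + 2 * R * (f x * ρ x)
        + f x ^ 2 * ρ x := fun x => by
      have := (pos x).ne'
      field_simp
      ring
    simp_rw [h]
    rw [intervalIntegral.integral_add, intervalIntegral.integral_add, intervalIntegral.integral_add,
      intervalIntegral.integral_sub, intervalIntegral.integral_sub,
      intervalIntegral.integral_const_mul, intervalIntegral.integral_const_mul,
      intervalIntegral.integral_const_mul, intervalIntegral.integral_const_mul,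
      intervalIntegral.integral_const_mul, i0, i3,
      intervalIntegral.integral_const, smul_eq_mul, Rm_int ρ, Rm_int (fun x => (ρ x)⁻¹)]
    · ring
    all_goals exact Continuous.intervalIntegrable (by fun_prop) _ _
  rw [e4] at h0
  have h1 : 0 ≤ (2 * π) * (S * (S * Rm (fun x => (ρ x)⁻¹) - R)) := by
    have : R ^ 2 * (2 * π * R) + 2 * R * (- (2 * π * E)) + 2 * π * (R * E) = 2 * π * (R * S) := by
      rw [hS]; ring
    nlinarith
  have h2 := nonneg_of_mul_nonneg_right h1 two_pi_pos
  have h3 := nonneg_of_mul_nonneg_right h2 Spos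
  linarith

lemma Rm_mono (f g : ℝ → ℝ) (hf : Continuous f) (hg : Continuous g)
    (h : ∀ x ∈ Icc (0:ℝ) (2 * π), f x ≤ g x) : Rm f ≤ Rm g := by
  unfold Rm
  apply div_le_div_of_nonneg_right _ two_pi_pos.le
  exact intervalIntegral.integral_mono_on two_pi_pos.le (hf.intervalIntegrable _ _)
    (hg.intervalIntegrable _ _) h

lemma Rm_const (c : ℝ) : Rm (fun _ => c) = c := by
  have := pi_ne_zero
  simp [Rm]

lemma Rm_pos (f : ℝ → ℝ) (hf : Continuous f) (h : ∀ x, 0 < f x) : 0 < Rm f := by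
  unfold Rm
  apply div_pos _ two_pi_pos
  exact intervalIntegral.intervalIntegral_pos_of_pos_on (hf.intervalIntegrable _ _)
      (fun x _ => h x) two_pi_pos

lemma Rm_nonneg (f : ℝ → ℝ) (h : ∀ x, 0 ≤ f x) : 0 ≤ Rm f := by
  unfold Rm
  apply div_nonneg _ two_pi_pos.le
  exact intervalIntegral.integral_nonneg two_pi_pos.le fun x _ => h x

lemma Rm_add (f g : ℝ → ℝ) (hf : Continuous f) (hg : Continuous g) :
    Rm (fun x => f x + g x) = Rm f + Rm g := by
  unfold Rm
  rw [intervalIntegral.integral_add (hf.intervalIntegrable _ _) (hg.intervalIntegrable _ _), add_div]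

lemma Rm_sub (f g : ℝ → ℝ) (hf : Continuous f) (hg : Continuous g) :
    Rm (fun x => f x - g x) = Rm f - Rm g := by
  unfold Rm
  rw [intervalIntegral.integral_sub (hf.intervalIntegrable _ _) (hg.intervalIntegrable _ _), sub_div]

lemma Rm_const_mul (c : ℝ) (f : ℝ → ℝ) : Rm (fun x => c * f x) = c * Rm f := by
  unfold Rm
  rw [intervalIntegral.integral_const_mul, mul_div_assoc]

lemma cheb (k : ℝ → ℝ) (hk : Continuous k) (pos : ∀ x, 0 < k x) (j : ℕ) :
    Rm k * Rm (fun x => k x ^ j) ≤ Rm (fun x => k x ^ (j + 1)) := by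
  set m := Rm k with hm
  have mpos : 0 < m := Rm_pos k hk pos
  have h0 : 0 ≤ Rm (fun x => (k x - m) * (k x ^ j - m ^ j)) := by
    apply Rm_nonneg
    intro x
    rcases le_total (k x) m with h | h
    · exact mul_nonneg_of_nonpos_of_nonpos (by linarith)
        (sub_nonpos.2 (pow_le_pow_left₀ (pos x).le h j))
    · exact mul_nonneg (by linarith) (sub_nonneg.2 (pow_le_pow_left₀ mpos.le h j))
  have e : (fun x => (k x - m) * (k x ^ j - m ^ j)) =
      fun x => ((k x ^ (j + 1) - m * k x ^ j) - m ^ j * k x) + m ^ (j + 1) := by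
    ext x; ring
  rw [e, Rm_add _ _ (by fun_prop) (by fun_prop), Rm_sub _ _ (by fun_prop) (by fun_prop),
    Rm_sub _ _ (by fun_prop) (by fun_prop), Rm_const_mul, Rm_const_mul, Rm_const, ← hm, pow_succ] at h0
  linarith

lemma jensen (k : ℝ → ℝ) (hk : Continuous k) (pos : ∀ x, 0 < k x) (j : ℕ) :
    Rm k ^ j ≤ Rm (fun x => k x ^ j) := by
  have mpos : 0 < Rm k := Rm_pos k hk pos
  induction j with
  | zero => simp [Rm_const]
  | succ j ih =>
    refine le_trans ?_ (cheb k hk pos j)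
    rw [pow_succ']
    exact mul_le_mul_of_nonneg_left ih mpos.le

lemma harm (ρ : ℝ → ℝ) (hρ : Continuous ρ) (pos : ∀ x, 0 < ρ x) :
    1 ≤ Rm ρ * Rm (fun x => (ρ x)⁻¹) := by
  have ck : Continuous (fun x => (ρ x)⁻¹) := hρ.inv₀ fun x => (pos x).ne'
  set K := Rm (fun x => (ρ x)⁻¹) with hK
  have Kpos : 0 < K := Rm_pos _ ck fun x => inv_pos.2 (pos x)
  have h0 : 0 ≤ Rm (fun x => (ρ x)⁻¹ * (1 - K * ρ x) ^ 2) := by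
    apply Rm_nonneg
    intro x
    exact mul_nonneg (inv_pos.2 (pos x)).le (sq_nonneg _)
  have e : (fun x => (ρ x)⁻¹ * (1 - K * ρ x) ^ 2) =
      fun x => ((ρ x)⁻¹ - 2 * K) + K ^ 2 * ρ x := by
    ext x
    have := (pos x).ne'
    field_simp; ring
  rw [e, Rm_add _ _ (by fun_prop) (by fun_prop), Rm_sub _ _ ck (by fun_prop),
    Rm_const_mul (K ^ 2), Rm_const (2 * K), ← hK] at h0
  have : 0 ≤ K * (Rm ρ * K - 1) := by linarith
  linarith [nonneg_of_mul_nonneg_right this Kpos]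

lemma kbound (p : ℕ) (hp : 1 ≤ p) (ρ : ℝ → ℝ) (hρ : Continuous ρ) (pos : ∀ x, 0 < ρ x)
    (c1 : ∫ φ in (0:ℝ)..(2 * π), cos φ * ρ φ = 0) (c2 : ∫ φ in (0:ℝ)..(2 * π), sin φ * ρ φ = 0)
    (hE : 10 ^ 12 * En ρ ≤ Rm ρ ^ 2) (V V1 : ℝ → ℝ) (hV : ∀ x, HasDerivAt V (V1 x) x)
    (cV1 : Continuous V1) (Vdef : ∀ x, V x = (ρ x)⁻¹ ^ p) (D : ℝ) (x0 : ℝ)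
    (hx0 : x0 ∈ Icc (0:ℝ) (2 * π)) (hmax : ∀ x ∈ Icc (0:ℝ) (2 * π), V x ≤ V x0)
    (hG : ∫ x in (0:ℝ)..(2 * π), V1 x ^ 2 ≤ (∫ x in (0:ℝ)..(2 * π), V x ^ 2) + D)
    (hD : D ≤ V x0 ^ 2) : Rm ρ ≤ 4 * ρ x0 := by
  by_contra! hcon
  have Rpos : 0 < Rm ρ := Rm_pos ρ hρ pos
  have cV : Continuous V := continuous_iff_continuousAt.2 fun x => (hV x).continuousAt
  have Vpos : ∀ x, 0 < V x := fun x => by rw [Vdef]; exact pow_pos (inv_pos.2 (pos x)) p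
  have i1 : ∫ x in (0:ℝ)..(2 * π), V x ^ 2 ≤ ∫ x in (0:ℝ)..(2 * π), V x0 ^ 2 := by
    apply intervalIntegral.integral_mono_on two_pi_pos.le
      (Continuous.intervalIntegrable (by fun_prop) _ _)
      (Continuous.intervalIntegrable (by fun_prop) _ _)
    intro x hx
    exact pow_le_pow_left₀ (Vpos x).le (hmax x hx) 2
  rw [intervalIntegral.integral_const, smul_eq_mul, sub_zero] at i1
  have i2 : ∫ x in (0:ℝ)..(2 * π), V1 x ^ 2 ≤ 8 * V x0 ^ 2 := by
    nlinarith [pi_lt_d2, sq_nonneg (V x0)]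
  have near : ∀ x ∈ Icc (0:ℝ) (2 * π), |x - x0| ≤ 1 / 32 → ρ x ≤ Rm ρ / 2 := by
    intro x hx hxx
    have o := osc_bound V V1 hV cV1 _ _ x x0 hx hx0
    have n1 : 0 ≤ ∫ θ in (0:ℝ)..(2 * π), V1 θ ^ 2 :=
      intervalIntegral.integral_nonneg two_pi_pos.le fun x _ => sq_nonneg _
    have o2 : (V x - V x0) ^ 2 ≤ (V x0 / 2) ^ 2 := by
      have := mul_le_mul hxx i2 n1 (by norm_num)
      nlinarith
    have o3 := abs_le_of_sq_le_sq o2 (by linarith [Vpos x0])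
    have o4 : V x0 / 2 ≤ V x := by linarith [(abs_le.1 o3).1]
    rw [Vdef, Vdef] at o4
    have o5 : ((ρ x0)⁻¹ / 2) ^ p ≤ (ρ x)⁻¹ ^ p := by
      refine le_trans ?_ o4
      rw [div_pow]
      apply div_le_div_of_nonneg_left (pow_pos (inv_pos.2 (pos x0)) p).le (by norm_num)
      calc (2:ℝ) = 2 ^ 1 := by norm_num
        _ ≤ 2 ^ p := pow_le_pow_right₀ (by norm_num) hp
    have o6 := le_of_pow_le_pow_left₀ (by omega) (inv_pos.2 (pos x)).le o5
    have h0 := pos x0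
    have h1 := pos x
    have : (ρ x0)⁻¹ / 2 = (2 * ρ x0)⁻¹ := by rw [mul_inv]; ring
    rw [this] at o6
    have := (inv_le_inv₀ (by linarith) h1).1 o6
    linarith
  obtain ⟨f, f1, hf, hf1, p0, p1, i0, i3, g1, g2, hb⟩ := static_f ρ hρ c1 c2
  have cf : Continuous f := continuous_iff_continuousAt.2 fun x => (hf x).continuousAt
  have fb : ∀ x ∈ Icc (0:ℝ) (2 * π), |f x| ≤ Rm ρ / 100000 := by
    intro x hx
    apply abs_le_of_sq_le_sq _ (by positivity)
    nlinarith [hb x hx, sq_pos_of_pos Rpos]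
  obtain ⟨a, ha0, ha1, ha2⟩ : ∃ a, 0 ≤ a ∧ a + 1 / 32 ≤ 2 * π ∧
      ∀ x ∈ Icc a (a + 1 / 32), |x - x0| ≤ 1 / 32 := by
    by_cases h : x0 ≤ π
    · refine ⟨x0, hx0.1, by linarith [pi_gt_three], fun x hx => ?_⟩
      rw [abs_le]; constructor <;> linarith [hx.1, hx.2]
    · refine ⟨x0 - 1 / 32, by linarith [pi_gt_three], by linarith [hx0.2], fun x hx => ?_⟩
      rw [abs_le]; constructor <;> linarith [hx.1, hx.2]
  have sub : ∀ x ∈ Icc a (a + 1 / 32), x ∈ Icc (0:ℝ) (2 * π) := fun x hx =>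
    ⟨by linarith [hx.1], by linarith [hx.2]⟩
  set c := a + 1 / 64 with hc
  have conc : ConcaveOn ℝ (Icc a (a + 1 / 32)) (fun x => f x + Rm ρ / 8 * (x - c) ^ 2) := by
    apply concaveOn_of_hasDerivWithinAt2_nonpos (convex_Icc _ _) (by fun_prop)
      (f' := fun x => f1 x + Rm ρ / 4 * (x - c))
      (f'' := fun x => (ρ x - Rm ρ - f x) + Rm ρ / 4)
    · intro x hx
      apply HasDerivAt.hasDerivWithinAt
      refine ((hf x).add ((((hasDerivAt_id x).sub_const c).fun_pow 2).const_mul (Rm ρ / 8))).congr_deriv ?_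
      simp; ring
    · intro x hx
      apply HasDerivAt.hasDerivWithinAt
      refine ((hf1 x).add (((hasDerivAt_id x).sub_const c).const_mul (Rm ρ / 4))).congr_deriv ?_
      simp
    · intro x hx
      have hx' := interior_subset hx
      have h1 := near x (sub x hx') (ha2 x hx')
      have h2 := (abs_le.1 (fb x (sub x hx'))).1
      linarith
  have hA : a ∈ Icc a (a + 1 / 32) := ⟨le_rfl, by linarith⟩
  have hB : a + 1 / 32 ∈ Icc a (a + 1 / 32) := ⟨by linarith, le_rfl⟩
  have hC : c ∈ Icc a (a + 1 / 32) := ⟨by linarith, by linarith⟩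
  have := conc.2 hA hB (by norm_num : (0:ℝ) ≤ 1 / 2) (by norm_num : (0:ℝ) ≤ 1 / 2) (by norm_num)
  simp only [smul_eq_mul] at this
  have ec : 1 / 2 * a + 1 / 2 * (a + 1 / 32) = c := by rw [hc]; ring
  rw [ec] at this
  have e1 : a - c = - (1 / 64) := by rw [hc]; ring
  have e2 : a + 1 / 32 - c = 1 / 64 := by rw [hc]; ring
  rw [e1, e2, sub_self] at this
  have b1 := (abs_le.1 (fb a (sub a hA))).1
  have b2 := (abs_le.1 (fb _ (sub _ hB))).1
  have b3 := (abs_le.1 (fb c (sub c hC))).2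
  linarith

lemma fCoeff_zero (f : ℝ → ℝ) : fCoeff f 0 = ((Rm f : ℝ) : ℂ) := by
  have : ((∫ x in (0:ℝ)..(2 * π), f x : ℝ) : ℂ) = ∫ x in (0:ℝ)..(2 * π), (f x : ℂ) :=
    intervalIntegral.integral_ofReal.symm
  rw [Rm, Complex.ofReal_div, this, fCoeff]
  simp only [Int.cast_zero, mul_zero, zero_mul, neg_zero, Complex.exp_zero, mul_one]
  push_cast
  ring

lemma fCoeff_zero_re (f : ℝ → ℝ) : (fCoeff f 0).re = Rm f := by
  rw [fCoeff_zero, Complex.ofReal_re]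

lemma coeff_deriv (f f1 : ℝ → ℝ) (hf : ∀ x, HasDerivAt f (f1 x) x) (hc : Continuous f1)
    (h0 : f 0 = f (2 * π)) (n : ℤ) : ‖fCoeff f n‖ * |(n:ℝ)| ≤ ‖fCoeff f1 n‖ := by
  by_cases hn0 : n = 0
  · simp [hn0]
  have h := fourierCoeffOn_of_hasDerivAt two_pi_pos (f := fun x => (f x : ℂ))
        (f' := fun x => (f1 x : ℂ)) hn0 (fun x _ => (hf x).ofReal_comp)
        (Continuous.intervalIntegrable (by fun_prop) _ _)
  rw [← h0, sub_self, mul_zero, zero_sub, aux_coeff, aux_coeff] at h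
  apply le_of_eq
  rw [h]
  have hn' : |(n:ℝ)| ≠ 0 := by positivity
  simp [abs_of_pos pi_pos]
  field_simp

lemma coeff_bound (f : ℝ → ℝ) (hf : Continuous f) :
    ∃ B, ∀ n, ‖fCoeff f n‖ ≤ B := by
  refine ⟨(1 / (2 * π)) * ∫ x in (0:ℝ)..(2 * π), |f x|, fun n => ?_⟩
  rw [fCoeff, norm_mul]
  have e : ‖(1 / (2 * (π:ℂ)))‖ = 1 / (2 * π) := by
    simp [abs_of_pos pi_pos]
  rw [e]
  apply mul_le_mul_of_nonneg_left _ (by positivity)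
  refine (intervalIntegral.norm_integral_le_integral_norm two_pi_pos.le).trans (le_of_eq ?_)
  congr 1
  ext x
  rw [norm_mul, Complex.norm_real, norm_eq_abs]
  have : -(Complex.I * n * x) = ((-(n * x) : ℝ) : ℂ) * Complex.I := by push_cast; ring
  rw [this, Complex.norm_exp_ofReal_mul_I, mul_one]

lemma periodic_deriv (f : ℝ → ℝ) (hp : ∀ x, f (x + 2 * π) = f x) (x : ℝ) :
    deriv f (x + 2 * π) = deriv f x := by
  have : (fun x => f (x + 2 * π)) = f := funext hp
  conv_rhs => rw [← this]
  rw [deriv_comp_add_const]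

lemma sn_nonneg (ψ : ℝ → ℝ) : 0 ≤ seminorm2 ψ := by
  apply le_max_of_le_left
  exact Real.iSup_nonneg fun n => by positivity

lemma coeff_le_sn (ψ : ℝ → ℝ) (hs : ContDiff ℝ (⊤ : ℕ∞) ψ) (hp : ∀ x, ψ (x + 2 * π) = ψ x) (n : ℤ) :
    (n:ℝ) ^ 2 * ‖fCoeff ψ n‖ ≤ 2 * seminorm2 ψ := by
  have hs1 : ContDiff ℝ (⊤ : ℕ∞) (deriv ψ) := (contDiff_infty_iff_deriv.1 hs).2
  have hs2 : ContDiff ℝ (⊤ : ℕ∞) (deriv (deriv ψ)) := (contDiff_infty_iff_deriv.1 hs1).2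
  have d0 : ∀ x, HasDerivAt ψ (deriv ψ x) x := fun x =>
    (hs.differentiable (by simp)).differentiableAt.hasDerivAt
  have d1 : ∀ x, HasDerivAt (deriv ψ) (deriv (deriv ψ) x) x := fun x =>
    (hs1.differentiable (by simp)).differentiableAt.hasDerivAt
  obtain ⟨B, hB⟩ := coeff_bound _ hs2.continuous
  have b : ∀ m : ℤ, (m:ℝ) ^ 2 * ‖fCoeff ψ m‖ ≤ B := by
    intro m
    have h1 := coeff_deriv ψ _ d0 hs1.continuous (by simpa using (hp 0).symm) m
    have h2 := coeff_deriv _ _ d1 hs2.continuous (by simpa using (periodic_deriv ψ hp 0).symm) m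
    rw [← sq_abs]
    have := mul_le_mul_of_nonneg_right h1 (abs_nonneg (m:ℝ))
    nlinarith [hB m]
  have r : (n:ℝ) ^ 2 * |(fCoeff ψ n).re| ≤ seminorm2 ψ := by
    apply le_max_of_le_left
    refine le_ciSup (f := fun n : ℤ => (n:ℝ) ^ 2 * |(fCoeff ψ n).re|) ⟨B, ?_⟩ n
    rintro _ ⟨m, rfl⟩
    exact (mul_le_mul_of_nonneg_left (Complex.abs_re_le_norm _) (sq_nonneg _)).trans (b m)
  have i : (n:ℝ) ^ 2 * |(fCoeff ψ n).im| ≤ seminorm2 ψ := by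
    apply le_max_of_le_right
    refine le_ciSup (f := fun n : ℤ => (n:ℝ) ^ 2 * |(fCoeff ψ n).im|) ⟨B, ?_⟩ n
    rintro _ ⟨m, rfl⟩
    exact (mul_le_mul_of_nonneg_left (Complex.abs_im_le_norm _) (sq_nonneg _)).trans (b m)
  have := mul_le_mul_of_nonneg_left (Complex.norm_le_abs_re_add_abs_im (fCoeff ψ n)) (sq_nonneg (n:ℝ))
  linarith

lemma sup_le_sn (ψ : ℝ → ℝ) (hs : ContDiff ℝ (⊤ : ℕ∞) ψ) (hp : ∀ x, ψ (x + 2 * π) = ψ x) (x : ℝ) :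
    |ψ x - Rm ψ| ≤ 2 * seminorm2 ψ * ∑' n : ℤ, 1 / (n:ℝ) ^ 2 := by
  haveI : Fact (0 < 2 * π) := ⟨two_pi_pos⟩
  have hper : Function.Periodic (fun x => (ψ x : ℂ)) (2 * π) := fun x => by simp [hp x]
  have hcont : Continuous (fun x => (ψ x : ℂ)) := Complex.continuous_ofReal.comp hs.continuous
  let F : C(AddCircle (2 * π), ℂ) := ⟨hper.lift, continuous_coinduced_dom.2 hcont⟩
  have hF : ∀ y : ℝ, F (y : AddCircle (2 * π)) = ψ y := fun y => hper.lift_coe y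
  have hco : ∀ n, fourierCoeff F n = fCoeff ψ n := by
    intro n
    rw [fourierCoeff_eq_intervalIntegral _ _ 0, fCoeff, zero_add]
    have : ∀ x : ℝ, fourier (-n) (x : AddCircle (2 * π)) • F (x : AddCircle (2 * π))
        = (ψ x : ℂ) * Complex.exp (-(Complex.I * n * x)) := by
      intro x
      rw [hF, fourier_coe_apply, smul_eq_mul, mul_comm]
      congr 2
      have : (π : ℂ) ≠ 0 := by exact_mod_cast pi_ne_zero
      push_cast
      field_simp
    simp_rw [this]
    rw [Complex.real_smul]
    push_cast
    simp
  have S : Summable fun n : ℤ => 2 * seminorm2 ψ * (1 / (n:ℝ) ^ 2) :=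
    (Real.summable_one_div_int_pow.2 (by norm_num)).mul_left _
  have bd : ∀ n : ℤ, n ≠ 0 → ‖fCoeff ψ n‖ ≤ 2 * seminorm2 ψ * (1 / (n:ℝ) ^ 2) := by
    intro n hn
    have := coeff_le_sn ψ hs hp n
    have : (n:ℝ) ^ 2 > 0 := by positivity
    rw [mul_one_div, le_div_iff₀ this]
    linarith
  have sum : Summable (fourierCoeff F) := by
    have S2 : Summable fun n : ℤ => 2 * seminorm2 ψ * (1 / (n:ℝ) ^ 2) +
        (if n = 0 then ‖fCoeff ψ 0‖ else 0) := S.add (hasSum_ite_eq 0 _).summable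
    refine S2.of_norm_bounded (fun n => ?_)
    rw [hco]
    by_cases hn : n = 0
    · subst hn; simp
    · simp only [hn, if_false, add_zero]; exact bd n hn
  have H := has_pointwise_sum_fourier_series_of_summable sum (x : AddCircle (2 * π))
  have H2 := H.sub (hasSum_ite_eq (0:ℤ) (fCoeff ψ 0))
  have e0 : fCoeff ψ 0 = ((Rm ψ : ℝ) : ℂ) := fCoeff_zero ψ
  have H3 := tsum_of_norm_bounded S.hasSum (f := fun n : ℤ => fourierCoeff F n • fourier n (x : AddCircle (2 * π))
      - if n = 0 then fCoeff ψ 0 else 0) (by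
    intro n
    by_cases hn : n = 0
    · subst hn; simp [hco]
    · simp only [hn, if_false, sub_zero, norm_smul, hco]
      have : ‖(fourier n (x : AddCircle (2 * π)) : ℂ)‖ = 1 := by
        rw [fourier_apply]; exact Circle.norm_coe _
      rw [this, mul_one]; exact bd n hn)
  rw [H2.tsum_eq, hF, e0, ← Complex.ofReal_sub, Complex.norm_real, tsum_mul_left] at H3
  exact H3

lemma init_close : ∃ cp > (0:ℝ), ∀ ψ : ℝ → ℝ, ContDiff ℝ (⊤ : ℕ∞) ψ → (∀ x, 0 < ψ x) →
    (∀ x, ψ (x + 2 * π) = ψ x) → cp * seminorm2 ψ ≤ (fCoeff ψ 0).re →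
    (∫ φ in (0:ℝ)..(2 * π), cos φ * (ψ φ)⁻¹ = 0) → (∫ φ in (0:ℝ)..(2 * π), sin φ * (ψ φ)⁻¹ = 0) →
    2 * 10 ^ 12 * En (fun x => (ψ x)⁻¹) ≤ Rm (fun x => (ψ x)⁻¹) ^ 2 := by
  have Z0 : 0 ≤ ∑' n : ℤ, 1 / (n:ℝ) ^ 2 := tsum_nonneg fun n => by positivity
  refine ⟨2 * 10 ^ 7 * (∑' n : ℤ, 1 / (n:ℝ) ^ 2) + 1, by positivity, ?_⟩
  intro ψ hs pos hp hcp c1 c2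
  rw [fCoeff_zero_re] at hcp
  have sn := sn_nonneg ψ
  set m := Rm ψ with hm
  have cψ := hs.continuous
  have mpos : 0 < m := Rm_pos ψ cψ pos
  have close : ∀ x, |ψ x - m| ≤ m / 10 ^ 7 := by
    intro x
    have := sup_le_sn ψ hs hp x
    rw [le_div_iff₀ (by norm_num)]
    nlinarith
  set ρ : ℝ → ℝ := fun x => (ψ x)⁻¹ with hρ
  have cρ : Continuous ρ := cψ.inv₀ fun x => (pos x).ne'
  set lo := ((1 + 1 / 10 ^ 7) * m)⁻¹ with hlo
  set hi := ((1 - 1 / 10 ^ 7) * m)⁻¹ with hhi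
  have l1 : ∀ x, lo ≤ ρ x := fun x => by
    apply inv_anti₀ (pos x)
    have := (abs_le.1 (close x)).2
    linarith
  have l2 : ∀ x, ρ x ≤ hi := fun x => by
    apply inv_anti₀ (by nlinarith)
    have := (abs_le.1 (close x)).1
    linarith
  have R1 : lo ≤ Rm ρ := by
    rw [← Rm_const lo]; exact Rm_mono _ _ (by fun_prop) cρ fun x _ => l1 x
  have R2 : Rm ρ ≤ hi := by
    rw [← Rm_const hi]; exact Rm_mono _ _ cρ (by fun_prop) fun x _ => l2 x
  have hE := En_le ρ cρ c1 c2 (hi - lo) (fun x _ => by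
    rw [abs_le]; constructor <;> linarith [l1 x, l2 x])
  have lopos : 0 < lo := by positivity
  have hd : hi - lo ≤ lo * (3 / 10 ^ 7) := by
    have : hi = lo * ((1 + 1 / 10 ^ 7) / (1 - 1 / 10 ^ 7)) := by
      rw [hlo, hhi]; field_simp
    rw [this]
    nlinarith
  have hd0 : 0 ≤ hi - lo := by linarith
  have : (hi - lo) ^ 2 ≤ (lo * (3 / 10 ^ 7)) ^ 2 := pow_le_pow_left₀ hd0 hd 2
  have h3 : lo ^ 2 ≤ Rm ρ ^ 2 := pow_le_pow_left₀ lopos.le R1 2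
  nlinarith

structure PFlow (p : ℕ) (T : ℝ) (k V1 V2 : ℝ × ℝ → ℝ) : Prop where
  hp : 1 ≤ p
  hT : 0 < T
  cont : ContinuousOn k (univ ×ˢ Ico 0 T)
  pos : ∀ θ, ∀ t ∈ Ico 0 T, 0 < k (θ, t)
  per : ∀ θ t, k (θ + 2 * π, t) = k (θ, t)
  c1 : ∀ t ∈ Ico 0 T, ∫ φ in (0:ℝ)..(2 * π), cos φ * (k (φ, t))⁻¹ = 0
  c2 : ∀ t ∈ Ico 0 T, ∫ φ in (0:ℝ)..(2 * π), sin φ * (k (φ, t))⁻¹ = 0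
  sm : ContDiffOn ℝ 1 k (univ ×ˢ Ioo 0 T)
  sm1 : ContDiffOn ℝ 1 V1 (univ ×ˢ Ioo 0 T)
  cV2 : ContinuousOn V2 (univ ×ˢ Ioo 0 T)
  d1 : ∀ θ, ∀ t ∈ Ioo 0 T, HasDerivAt (fun x => k (x, t) ^ p) (V1 (θ, t)) θ
  d2 : ∀ θ, ∀ t ∈ Ioo 0 T, HasDerivAt (fun x => V1 (x, t)) (V2 (θ, t)) θ
  dV : ∀ θ, ∀ t ∈ Ioo 0 T, HasDerivAt (fun s => k (θ, s) ^ p)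
    (k (θ, t) ^ (p + 1) * (V2 (θ, t) + k (θ, t) ^ p)) t
  dr : ∀ θ, ∀ t ∈ Ioo 0 T, HasDerivAt (fun s => (k (θ, s))⁻¹)
    (-(1 / (p:ℝ)) * (V2 (θ, t) + k (θ, t) ^ p)) t
  blow : Tendsto (fun t => ⨆ θ : Icc (0:ℝ) (2 * π), k ((θ : ℝ), t)) (nhdsWithin T (Iio T)) atTop

lemma slice_deriv (W : ℝ × ℝ → ℝ) (q : ℝ × ℝ) (h : DifferentiableAt ℝ W q) :
    HasDerivAt (fun x => W (x, q.2)) (fderiv ℝ W q (1, 0)) q.1 := by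
  have h1 : HasFDerivAt W (fderiv ℝ W q) (q.1, q.2) := h.hasFDerivAt
  have h2 : HasDerivAt (fun x : ℝ => (x, q.2)) ((1:ℝ), (0:ℝ)) q.1 :=
    (hasDerivAt_id q.1).prodMk (hasDerivAt_const q.1 q.2)
  exact h1.comp_hasDerivAt q.1 h2

lemma closing (ρ : ℝ → ℝ) (hc : Continuous ρ) (h : (∫ θ in (0:ℝ)..(2 * Real.pi), Complex.exp (Complex.I * θ) / (ρ θ)) = 0)
    (hpos : ∀ x, 0 < ρ x) :
    (∫ φ in (0:ℝ)..(2 * π), cos φ * (ρ φ)⁻¹ = 0) ∧ (∫ φ in (0:ℝ)..(2 * π), sin φ * (ρ φ)⁻¹ = 0) := by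
  have ci : Continuous fun x => (ρ x)⁻¹ := hc.inv₀ fun x => (hpos x).ne'
  have e : ∀ θ : ℝ, Complex.exp (Complex.I * θ) / (ρ θ) =
      ((cos θ * (ρ θ)⁻¹ : ℝ) : ℂ) + Complex.I * ((sin θ * (ρ θ)⁻¹ : ℝ) : ℂ) := by
    intro θ
    rw [mul_comm, Complex.exp_mul_I]
    push_cast
    rw [div_eq_mul_inv]
    ring
  simp_rw [e] at h
  rw [intervalIntegral.integral_add (Continuous.intervalIntegrable (by fun_prop) _ _)
    (Continuous.intervalIntegrable (by fun_prop) _ _), intervalIntegral.integral_const_mul,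
    intervalIntegral.integral_ofReal, intervalIntegral.integral_ofReal] at h
  have h1 := congrArg Complex.re h
  have h2 := congrArg Complex.im h
  simp only [Complex.add_re, Complex.add_im, Complex.ofReal_re, Complex.ofReal_im, Complex.mul_re,
    Complex.mul_im, Complex.I_re, Complex.I_im, Complex.zero_re, Complex.zero_im] at h1 h2
  constructor
  · linarith
  · linarith

lemma toFlow (p : ℕ) (hp : 1 ≤ p) (T : ℝ) (hT : 0 < T) (k : ℝ → ℝ → ℝ) (ψ : ℝ → ℝ)
    (h : IsPCSF p T k ψ) : ∃ V1 V2, PFlow p T (fun q => k q.1 q.2) V1 V2 := by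
  obtain ⟨hs, per, pos, pde, h0, hψ, -, -, blow, cl⟩ := h
  have Oo : IsOpen ((univ : Set ℝ) ×ˢ Ioo (0:ℝ) T) := isOpen_univ.prod isOpen_Ioo
  have hsO : ContDiffOn ℝ (⊤ : ℕ∞) (fun q : ℝ × ℝ => k q.1 q.2) (univ ×ˢ Ioo 0 T) :=
    hs.mono (prod_mono le_rfl Ioo_subset_Ico_self)
  have slice : ∀ t ∈ Ico 0 T, Continuous fun x => k x t := by
    intro t ht
    have : ContinuousOn (fun q : ℝ × ℝ => k q.1 q.2) (univ ×ˢ Ico 0 T) := hs.continuousOn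
    exact this.comp_continuous (f := fun x : ℝ => (x, t)) (by fun_prop) (fun x => ⟨mem_univ _, ht⟩)
  set V : ℝ × ℝ → ℝ := fun q => k q.1 q.2 ^ p with hV
  have sV : ContDiffOn ℝ (⊤ : ℕ∞) V (univ ×ˢ Ioo 0 T) := hsO.pow p
  set V1 : ℝ × ℝ → ℝ := fun q => fderiv ℝ V q (1, 0) with hV1
  have sV1 : ContDiffOn ℝ (⊤ : ℕ∞) V1 (univ ×ˢ Ioo 0 T) :=
    (sV.fderiv_of_isOpen Oo (m := (⊤ : ℕ∞)) (by simp)).clm_apply contDiffOn_const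
  set V2 : ℝ × ℝ → ℝ := fun q => fderiv ℝ V1 q (1, 0) with hV2
  have sV2 : ContDiffOn ℝ (⊤ : ℕ∞) V2 (univ ×ˢ Ioo 0 T) :=
    (sV1.fderiv_of_isOpen Oo (m := (⊤ : ℕ∞)) (by simp)).clm_apply contDiffOn_const
  have d1 : ∀ θ, ∀ t ∈ Ioo 0 T, HasDerivAt (fun x => k x t ^ p) (V1 (θ, t)) θ := by
    intro θ t ht
    exact slice_deriv V (θ, t) ((sV.differentiableOn (by simp)).differentiableAt
      (Oo.mem_nhds ⟨mem_univ _, ht⟩))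
  have d2 : ∀ θ, ∀ t ∈ Ioo 0 T, HasDerivAt (fun x => V1 (x, t)) (V2 (θ, t)) θ := by
    intro θ t ht
    exact slice_deriv V1 (θ, t) ((sV1.differentiableOn (by simp)).differentiableAt
      (Oo.mem_nhds ⟨mem_univ _, ht⟩))
  have p0 : (p:ℝ) ≠ 0 := by positivity
  have form : ∀ θ, ∀ t ∈ Ioo 0 T, V2 (θ, t) = p * (k θ t ^ (p - 1) * deriv (deriv (fun x => k x t)) θ
        + ((p : ℝ) - 1) * (k θ t)^(p - 2) * (deriv (fun x => k x t) θ)^2) := by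
    intro θ t ht
    have sk : ContDiff ℝ (⊤ : ℕ∞) fun x => k x t := by
      have := hsO.comp (s := univ) (f := fun x : ℝ => (x, t)) (by fun_prop)
        (fun x _ => ⟨mem_univ _, ht⟩)
      exact contDiffOn_univ.1 this
    have sk1 := (contDiff_infty_iff_deriv.1 sk).2
    have e1 : ∀ x, HasDerivAt (fun x => k x t) (deriv (fun x => k x t) x) x := fun x =>
      (sk.differentiable (by simp)).differentiableAt.hasDerivAt
    have e2 : ∀ x, HasDerivAt (deriv fun x => k x t) (deriv (deriv fun x => k x t) x) x := fun x =>
      (sk1.differentiable (by simp)).differentiableAt.hasDerivAt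
    have e3 : (fun x => V1 (x, t)) = fun x => p * k x t ^ (p - 1) * deriv (fun x => k x t) x := by
      funext x
      exact (d1 x t ht).unique ((e1 x).pow p)
    have e4 := ((((e1 θ).pow (p - 1)).const_mul (p:ℝ)).mul (e2 θ))
    have e5 := d2 θ t ht
    rw [e3] at e5
    have e6 := e5.unique e4
    rw [e6, Pi.pow_apply]
    push_cast [Nat.cast_sub hp]
    rw [show p - 1 - 1 = p - 2 by omega]
    ring
  refine ⟨V1, V2, hp, hT, hs.continuousOn, pos, per, ?_, ?_, hsO.of_le (by simp), sV1.of_le (by simp),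
    sV2.continuousOn, d1, d2, ?_, ?_, blow⟩
  · intro t ht
    exact (closing _ (slice t ht) (cl t ht) fun x => pos x t ht).1
  · intro t ht
    exact (closing _ (slice t ht) (cl t ht) fun x => pos x t ht).2
  · intro θ t ht
    have ht' := Ioo_subset_Ico_self ht
    have := (pde θ t ht').pow p
    refine this.congr_deriv ?_
    simp only
    rw [form θ t ht]
    obtain ⟨m, rfl⟩ : ∃ m, p = m + 1 := ⟨p - 1, by omega⟩
    simp only [Nat.add_sub_cancel]
    field_simp
    ring
  · intro θ t ht
    have ht' := Ioo_subset_Ico_self ht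
    have hk := pos θ t ht'
    have := (pde θ t ht').inv hk.ne'
    refine this.congr_deriv ?_
    simp only
    rw [form θ t ht]
    field_simp

lemma lip_t (T : ℝ) (W : ℝ × ℝ → ℝ) (hW : ContDiffOn ℝ 1 W (univ ×ˢ Ioo 0 T)) (s : ℝ)
    (hs : s ∈ Ioo 0 T) : ∃ C ≥ (0:ℝ), ∃ ε > (0:ℝ), Metric.closedBall s ε ⊆ Ioo 0 T ∧
    ∀ θ ∈ Icc (0:ℝ) (2 * π), ∀ t ∈ Metric.closedBall s ε, ∀ t' ∈ Metric.closedBall s ε,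
      |W (θ, t) - W (θ, t')| ≤ C * |t - t'| := by
  obtain ⟨ε, e0, he⟩ := Metric.nhds_basis_closedBall.mem_iff.1 (isOpen_Ioo.mem_nhds hs)
  obtain ⟨K, hK⟩ := (hW.mono (s := univ ×ˢ Ioo 0 T) (t := Icc (0:ℝ) (2 * π) ×ˢ Metric.closedBall s ε)
    (prod_mono (subset_univ _) he)).exists_lipschitzOnWith one_ne_zero
    ((convex_Icc _ _).prod (convex_closedBall _ _)) (isCompact_Icc.prod (isCompact_closedBall _ _))
  refine ⟨K, K.2, ε, e0, he, fun θ hθ t ht t' ht' => ?_⟩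
  have := hK.dist_le_mul (θ, t) ⟨hθ, ht⟩ (θ, t') ⟨hθ, ht'⟩
  simpa [Real.dist_eq, Prod.dist_eq] using this

lemma slice_cont (T : ℝ) (W : ℝ × ℝ → ℝ) (hW : ContinuousOn W (univ ×ˢ Ioo 0 T)) (t : ℝ)
    (ht : t ∈ Ioo 0 T) : Continuous fun x => W (x, t) :=
  hW.comp_continuous (f := fun x : ℝ => (x, t)) (by fun_prop) (fun x => ⟨mem_univ _, ht⟩)

lemma lin_deriv (T : ℝ) (W : ℝ × ℝ → ℝ) (hW : ContDiffOn ℝ 1 W (univ ×ˢ Ioo 0 T)) (s : ℝ)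
    (hs : s ∈ Ioo 0 T) (g W' : ℝ → ℝ) (hg : Continuous g) (hW' : Continuous W')
    (hd : ∀ θ, HasDerivAt (fun t => W (θ, t)) (W' θ) s) :
    HasDerivAt (fun t => ∫ θ in (0:ℝ)..(2 * π), g θ * W (θ, t))
      (∫ θ in (0:ℝ)..(2 * π), g θ * W' θ) s := by
  obtain ⟨C, C0, ε, e0, he, hC⟩ := lip_t T W hW s hs
  have sl := slice_cont T W hW.continuousOn
  have mem : Metric.closedBall s ε ∈ nhds s := Metric.closedBall_mem_nhds s e0
  refine (intervalIntegral.hasDerivAt_integral_of_dominated_loc_of_lip (bound := fun θ => C * |g θ|)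
    mem ?_ ?_ ?_ ?_ ?_ ?_).2
  · filter_upwards [mem] with t ht
    have := sl t (he ht)
    exact (hg.mul this).aestronglyMeasurable
  · have := sl s hs
    exact (hg.mul this).intervalIntegrable _ _
  · exact (Continuous.aestronglyMeasurable (by fun_prop))
  · refine Eventually.of_forall fun θ hθ => ?_
    rw [uIoc_of_le two_pi_pos.le] at hθ
    refine LipschitzOnWith.of_dist_le_mul fun t ht t' ht' => ?_
    have := hC θ (Ioc_subset_Icc_self hθ) t ht t' ht'
    rw [Real.dist_eq, Real.dist_eq, ← mul_sub, abs_mul]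
    have e : ((Real.nnabs (C * |g θ|) : NNReal) : ℝ) = C * |g θ| := by
      simp [abs_of_nonneg C0]
    rw [e]
    nlinarith [abs_nonneg (g θ)]
  · exact Continuous.intervalIntegrable (by fun_prop) _ _
  · exact Eventually.of_forall fun θ _ => (hd θ).const_mul _

lemma quad_deriv (Q L : ℝ → ℝ) (d s C : ℝ) (hL : HasDerivAt L d s)
    (h : ∀ᶠ t in nhds s, |Q t - Q s - (L t - L s)| ≤ C * |t - s| ^ 2) : HasDerivAt Q d s := by
  have h1 : HasDerivAt (fun t => Q t - Q s - (L t - L s)) 0 s := by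
    rw [hasDerivAt_iff_isLittleO]
    have : (fun t => Q t - Q s - (L t - L s)) =O[nhds s] fun t => (t - s) ^ 2 :=
      Asymptotics.IsBigO.of_bound C (by
        filter_upwards [h] with t ht
        simpa [abs_pow] using ht)
    have h2 : (fun t : ℝ => (t - s) ^ 2) =o[nhds s] fun t => t - s := by
      have := Asymptotics.isLittleO_pow_id (𝕜 := ℝ) (n := 2) (by norm_num)
      have h3 : Tendsto (fun t : ℝ => t - s) (nhds s) (nhds 0) := by
        have : Continuous fun t : ℝ => t - s := by fun_prop
        simpa using this.tendsto s
      exact this.comp_tendsto h3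
    simpa using this.trans_isLittleO h2
  have h4 := (h1.add hL).add_const (Q s - L s)
  rw [zero_add] at h4
  refine h4.congr_of_eventuallyEq (Eventually.of_forall fun t => ?_)
  simp only [Pi.add_apply]
  ring

lemma hsup_bc (ρ : ℝ → ℝ) (c1 : ∫ φ in (0:ℝ)..(2 * π), cos φ * ρ φ = 0)
    (c2 : ∫ φ in (0:ℝ)..(2 * π), sin φ * ρ φ = 0) :
    hsup ρ 0 = hsup ρ (2 * π) ∧ hsup1 ρ 0 = hsup1 ρ (2 * π) := by
  simp [hsup, hsup1, c1, c2]

lemma hsup_form (a b : ℝ → ℝ) (ca : Continuous a) (cb : Continuous b)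
    (a1 : ∫ φ in (0:ℝ)..(2 * π), cos φ * a φ = 0) (a2 : ∫ φ in (0:ℝ)..(2 * π), sin φ * a φ = 0)
    (b1 : ∫ φ in (0:ℝ)..(2 * π), cos φ * b φ = 0) (b2 : ∫ φ in (0:ℝ)..(2 * π), sin φ * b φ = 0) :
    ∫ x in (0:ℝ)..(2 * π), hsup a x * b x =
      -(∫ x in (0:ℝ)..(2 * π), hsup1 a x * hsup1 b x) + ∫ x in (0:ℝ)..(2 * π), hsup a x * hsup b x := by
  have h1 := hsup_cont a ca
  have h2 := hsup_cont b cb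
  have h3 := ibp (hsup a) (hsup1 b) (hsup1 a) (fun x => b x - hsup b x) (hsup_deriv a ca)
    (hsup1_deriv b cb) (hsup1_cont a ca) (by fun_prop) (hsup_bc a a1 a2).1 (hsup_bc b b1 b2).2
  rw [← h3, ← intervalIntegral.integral_add (Continuous.intervalIntegrable (by fun_prop) _ _)
    (Continuous.intervalIntegrable (by fun_prop) _ _)]
  congr 1
  ext x
  ring

lemma hsup_symm (a b : ℝ → ℝ) (ca : Continuous a) (cb : Continuous b)
    (a1 : ∫ φ in (0:ℝ)..(2 * π), cos φ * a φ = 0) (a2 : ∫ φ in (0:ℝ)..(2 * π), sin φ * a φ = 0)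
    (b1 : ∫ φ in (0:ℝ)..(2 * π), cos φ * b φ = 0) (b2 : ∫ φ in (0:ℝ)..(2 * π), sin φ * b φ = 0) :
    ∫ x in (0:ℝ)..(2 * π), hsup a x * b x = ∫ x in (0:ℝ)..(2 * π), hsup b x * a x := by
  rw [hsup_form a b ca cb a1 a2 b1 b2, hsup_form b a cb ca b1 b2 a1 a2]
  simp_rw [mul_comm]

lemma hsup_sub (a b : ℝ → ℝ) (ca : Continuous a) (cb : Continuous b) (x : ℝ) :
    hsup (fun x => a x - b x) x = hsup a x - hsup b x := by
  simp only [hsup, mul_sub]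
  rw [intervalIntegral.integral_sub (Continuous.intervalIntegrable (by fun_prop) _ _)
    (Continuous.intervalIntegrable (by fun_prop) _ _), intervalIntegral.integral_sub (Continuous.intervalIntegrable (by fun_prop) _ _)
    (Continuous.intervalIntegrable (by fun_prop) _ _)]
  ring

lemma hsup_le (d : ℝ → ℝ) (M : ℝ) (hM : ∀ x ∈ Icc (0:ℝ) (2 * π), |d x| ≤ M)
    (x : ℝ) (hx : x ∈ Icc (0:ℝ) (2 * π)) : |hsup d x| ≤ 4 * π * M := by
  have M0 : 0 ≤ M := (abs_nonneg _).trans (hM x hx)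
  have key : ∀ u : ℝ → ℝ, (∀ y, |u y| ≤ 1) → |∫ φ in (0:ℝ)..x, u φ * d φ| ≤ 2 * π * M := by
    intro u hu
    have := intervalIntegral.norm_integral_le_of_norm_le_const (a := 0) (b := x) (C := M)
      (f := fun φ => u φ * d φ) (by
        intro y hy
        rw [uIoc_of_le hx.1] at hy
        have h1 := hM y ⟨hy.1.le, hy.2.trans hx.2⟩
        rw [norm_eq_abs, abs_mul]
        calc _ ≤ 1 * M := mul_le_mul (hu y) h1 (abs_nonneg _) zero_le_one
          _ = M := one_mul M)
    rw [norm_eq_abs, sub_zero, abs_of_nonneg hx.1] at this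
    nlinarith [hx.2]
  have k1 := key cos abs_cos_le_one
  have k2 := key sin abs_sin_le_one
  have s1 := abs_sin_le_one x
  have s2 := abs_cos_le_one x
  rw [hsup]
  refine (abs_sub _ _).trans ?_
  rw [abs_mul, abs_mul]
  nlinarith [mul_le_mul s1 k1 (abs_nonneg _) zero_le_one, mul_le_mul s2 k2 (abs_nonneg _) zero_le_one]

namespace PFlow

variable {p : ℕ} {T : ℝ} {k V1 V2 : ℝ × ℝ → ℝ}

lemma kc (F : PFlow p T k V1 V2) (t : ℝ) (ht : t ∈ Ico 0 T) : Continuous fun x => k (x, t) :=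
  F.cont.comp_continuous (f := fun x : ℝ => (x, t)) (by fun_prop) (fun x => ⟨mem_univ _, ht⟩)

lemma rc (F : PFlow p T k V1 V2) (t : ℝ) (ht : t ∈ Ico 0 T) : Continuous fun x => (k (x, t))⁻¹ :=
  (F.kc t ht).inv₀ fun x => (F.pos x t ht).ne'

lemma rpos (F : PFlow p T k V1 V2) (t : ℝ) (ht : t ∈ Ico 0 T) (x : ℝ) : 0 < (k (x, t))⁻¹ :=
  inv_pos.2 (F.pos x t ht)

lemma per1 (F : PFlow p T k V1 V2) (t : ℝ) (ht : t ∈ Ioo 0 T) : V1 (0, t) = V1 (2 * π, t) := by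
  have h := periodic_deriv (fun x => k (x, t) ^ p) (fun x => by simp only [F.per]) 0
  rw [zero_add, (F.d1 0 t ht).deriv, (F.d1 (2 * π) t ht).deriv] at h
  exact h.symm

lemma V1c (F : PFlow p T k V1 V2) (t : ℝ) (ht : t ∈ Ioo 0 T) : Continuous fun x => V1 (x, t) :=
  slice_cont T V1 F.sm1.continuousOn t ht

lemma V2c (F : PFlow p T k V1 V2) (t : ℝ) (ht : t ∈ Ioo 0 T) : Continuous fun x => V2 (x, t) :=
  slice_cont T V2 F.cV2 t ht

lemma perk (F : PFlow p T k V1 V2) (t : ℝ) : k (0, t) = k (2 * π, t) := by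
  have := F.per 0 t
  rw [zero_add] at this
  exact this.symm

lemma test (F : PFlow p T k V1 V2) (t : ℝ) (ht : t ∈ Ioo 0 T) (g g1 w : ℝ → ℝ)
    (hg : ∀ x, HasDerivAt g (g1 x) x) (hg1 : ∀ x, HasDerivAt g1 (w x - g x) x)
    (cw : Continuous w) (p0 : g 0 = g (2 * π)) (p1 : g1 0 = g1 (2 * π)) :
    ∫ x in (0:ℝ)..(2 * π), g x * (V2 (x, t) + k (x, t) ^ p) =
      ∫ x in (0:ℝ)..(2 * π), w x * k (x, t) ^ p := by
  have ht' := Ioo_subset_Ico_self ht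
  have cg : Continuous g := continuous_iff_continuousAt.2 fun x => (hg x).continuousAt
  have cg1 : Continuous g1 := continuous_iff_continuousAt.2 fun x => (hg1 x).continuousAt
  have cV : Continuous fun x => k (x, t) ^ p := (F.kc t ht').pow p
  have h1 := ibp g (fun x => V1 (x, t)) g1 _ hg (fun x => F.d2 x t ht) cg1 (F.V2c t ht) p0 (F.per1 t ht)
  have h2 := ibp (fun x => k (x, t) ^ p) g1 _ _ (fun x => F.d1 x t ht) hg1 (F.V1c t ht) (by fun_prop)
    (by simp only [F.perk]) p1
  have h3 : ∫ x in (0:ℝ)..(2 * π), g x * V2 (x, t) =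
      ∫ x in (0:ℝ)..(2 * π), k (x, t) ^ p * (w x - g x) := by
    rw [h1, h2]
    simp_rw [mul_comm]
  simp_rw [mul_add]
  have i1 : IntervalIntegrable (fun x => g x * V2 (x, t)) volume 0 (2 * π) :=
    (cg.mul (F.V2c t ht)).intervalIntegrable _ _
  have i2 : IntervalIntegrable (fun x => g x * k (x, t) ^ p) volume 0 (2 * π) :=
    (cg.mul cV).intervalIntegrable _ _
  have i3 : IntervalIntegrable (fun x => k (x, t) ^ p * (w x - g x)) volume 0 (2 * π) :=
    (cV.mul (cw.sub cg)).intervalIntegrable _ _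
  rw [intervalIntegral.integral_add i1 i2, h3, ← intervalIntegral.integral_add i3 i2]
  congr 1
  ext x
  ring

lemma smr (F : PFlow p T k V1 V2) : ContDiffOn ℝ 1 (fun q => (k q)⁻¹) (univ ×ˢ Ioo 0 T) :=
  F.sm.inv fun q hq => (F.pos q.1 q.2 (Ioo_subset_Ico_self hq.2)).ne'

lemma rtest (F : PFlow p T k V1 V2) (t : ℝ) (ht : t ∈ Ioo 0 T) (g g1 w : ℝ → ℝ)
    (hg : ∀ x, HasDerivAt g (g1 x) x) (hg1 : ∀ x, HasDerivAt g1 (w x - g x) x)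
    (cw : Continuous w) (p0 : g 0 = g (2 * π)) (p1 : g1 0 = g1 (2 * π)) :
    HasDerivAt (fun s => ∫ x in (0:ℝ)..(2 * π), g x * (k (x, s))⁻¹)
      (-(1 / (p:ℝ)) * ∫ x in (0:ℝ)..(2 * π), w x * k (x, t) ^ p) t := by
  have ht' := Ioo_subset_Ico_self ht
  have cg : Continuous g := continuous_iff_continuousAt.2 fun x => (hg x).continuousAt
  have cV : Continuous fun x => k (x, t) ^ p := (F.kc t ht').pow p
  have := lin_deriv T (fun q => (k q)⁻¹) F.smr t ht g
    (fun x => -(1 / (p:ℝ)) * (V2 (x, t) + k (x, t) ^ p)) cg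
    (continuous_const.mul ((F.V2c t ht).add cV)) (fun θ => F.dr θ t ht)
  refine this.congr_deriv ?_
  rw [← F.test t ht g g1 w hg hg1 cw p0 p1, ← intervalIntegral.integral_const_mul]
  congr 1
  ext x
  ring

lemma r_deriv (F : PFlow p T k V1 V2) (t : ℝ) (ht : t ∈ Ioo 0 T) :
    HasDerivAt (fun s => Rm fun x => (k (x, s))⁻¹) (-(1 / (p:ℝ)) * Rm fun x => k (x, t) ^ p) t := by
  have := (F.rtest t ht (fun _ => 1) (fun _ => 0) (fun _ => 1) (fun x => hasDerivAt_const _ _)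
    (fun x => by simpa using hasDerivAt_const x (0:ℝ)) continuous_const rfl rfl).div_const (2 * π)
  simp only [one_mul] at this
  refine this.congr_deriv ?_
  rw [Rm, mul_div_assoc]

lemma B_deriv (F : PFlow p T k V1 V2) (t : ℝ) (ht : t ∈ Ioo 0 T) :
    HasDerivAt (fun s => ∫ x in (0:ℝ)..(2 * π), hsup (fun y => (k (y, s))⁻¹) x * (k (x, s))⁻¹)
      (-(2 / (p:ℝ)) * ∫ x in (0:ℝ)..(2 * π), k (x, t) ^ (p - 1)) t := by
  have ht' := Ioo_subset_Ico_self ht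
  set h : ℝ → ℝ := hsup fun y => (k (y, t))⁻¹ with hh
  have rt := F.rc t ht'
  have ch : Continuous h := hsup_cont _ rt
  obtain ⟨b1, b2⟩ := hsup_bc _ (F.c1 t ht') (F.c2 t ht')
  have hL := (F.rtest t ht h _ _ (hsup_deriv _ rt) (hsup1_deriv _ rt) rt b1 b2).const_mul 2
  obtain ⟨C, C0, ε, e0, he, hC⟩ := lip_t T _ F.smr t ht
  refine (quad_deriv _ _ _ t (8 * π ^ 2 * C ^ 2) hL ?_).congr_deriv ?_
  · filter_upwards [Metric.closedBall_mem_nhds t e0] with s hs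
    have hs' := Ioo_subset_Ico_self (he hs)
    have rs := F.rc s hs'
    have chs := hsup_cont _ rs
    have sy := hsup_symm _ _ rs rt (F.c1 s hs') (F.c2 s hs') (F.c1 t ht') (F.c2 t ht')
    have i1 : IntervalIntegrable (fun x => hsup (fun y => (k (y, s))⁻¹) x * (k (x, s))⁻¹) volume 0 (2 * π) :=
      (chs.mul rs).intervalIntegrable _ _
    have i2 : IntervalIntegrable (fun x => hsup (fun y => (k (y, s))⁻¹) x * (k (x, t))⁻¹) volume 0 (2 * π) :=
      (chs.mul rt).intervalIntegrable _ _
    have i3 : IntervalIntegrable (fun x => h x * (k (x, s))⁻¹) volume 0 (2 * π) :=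
      (ch.mul rs).intervalIntegrable _ _
    have i4 : IntervalIntegrable (fun x => h x * (k (x, t))⁻¹) volume 0 (2 * π) :=
      (ch.mul rt).intervalIntegrable _ _
    have e : ∫ x in (0:ℝ)..(2 * π), hsup (fun y => (k (y, s))⁻¹ - (k (y, t))⁻¹) x * ((k (x, s))⁻¹ - (k (x, t))⁻¹)
        = (∫ x in (0:ℝ)..(2 * π), hsup (fun y => (k (y, s))⁻¹) x * (k (x, s))⁻¹)
        - (∫ x in (0:ℝ)..(2 * π), hsup (fun y => (k (y, s))⁻¹) x * (k (x, t))⁻¹)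
        - ((∫ x in (0:ℝ)..(2 * π), h x * (k (x, s))⁻¹) - ∫ x in (0:ℝ)..(2 * π), h x * (k (x, t))⁻¹) := by
      rw [← intervalIntegral.integral_sub i1 i2, ← intervalIntegral.integral_sub i3 i4,
        ← intervalIntegral.integral_sub (i1.sub i2) (i3.sub i4)]
      congr 1
      ext x
      rw [hsup_sub _ _ rs rt]
      ring
    have bd : |∫ x in (0:ℝ)..(2 * π), hsup (fun y => (k (y, s))⁻¹ - (k (y, t))⁻¹) x * ((k (x, s))⁻¹ - (k (x, t))⁻¹)|
        ≤ 8 * π ^ 2 * C ^ 2 * |s - t| ^ 2 := by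
      have hM : ∀ x ∈ Icc (0:ℝ) (2 * π), |(k (x, s))⁻¹ - (k (x, t))⁻¹| ≤ C * |s - t| := fun x hx =>
        hC x hx s hs t (Metric.mem_closedBall_self e0.le)
      have hb := hsup_le _ _ hM
      have := intervalIntegral.norm_integral_le_of_norm_le_const (a := 0) (b := 2 * π)
        (C := 4 * π * (C * |s - t|) * (C * |s - t|))
        (f := fun x => hsup (fun y => (k (y, s))⁻¹ - (k (y, t))⁻¹) x * ((k (x, s))⁻¹ - (k (x, t))⁻¹)) (by
          intro y hy
          rw [uIoc_of_le two_pi_pos.le] at hy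
          have hy' := Ioc_subset_Icc_self hy
          rw [norm_eq_abs, abs_mul]
          exact mul_le_mul (hb y hy') (hM y hy') (abs_nonneg _) (by positivity))
      rw [norm_eq_abs, sub_zero, abs_of_pos two_pi_pos] at this
      refine this.trans (le_of_eq ?_)
      ring
    refine le_of_eq_of_le ?_ bd
    rw [e, sy]
    congr 1
    ring
  · have : ∀ x, (k (x, t))⁻¹ * k (x, t) ^ p = k (x, t) ^ (p - 1) := by
      intro x
      have := (F.pos x t ht').ne'
      obtain ⟨m, rfl⟩ : ∃ m, p = m + 1 := ⟨p - 1, by have := F.hp; omega⟩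
      rw [Nat.add_sub_cancel, pow_succ]
      field_simp
    simp_rw [this]
    ring

lemma G_deriv (F : PFlow p T k V1 V2) (t : ℝ) (ht : t ∈ Ioo 0 T) :
    ∃ d ≥ 0, HasDerivAt (fun s => (∫ x in (0:ℝ)..(2 * π), (k (x, s) ^ p) ^ 2) -
      ∫ x in (0:ℝ)..(2 * π), V1 (x, s) ^ 2) d t := by
  have ht' := Ioo_subset_Ico_self ht
  have cV : Continuous fun x => k (x, t) ^ p := (F.kc t ht').pow p
  have c1 := F.V1c t ht
  have c2 := F.V2c t ht
  have ck := F.kc t ht'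
  have smV : ContDiffOn ℝ 1 (fun q => k q ^ p) (univ ×ˢ Ioo 0 T) := F.sm.pow p
  have cg : Continuous fun x => 2 * (k (x, t) ^ p + V2 (x, t)) := continuous_const.mul (cV.add c2)
  have hL := lin_deriv T _ smV t ht (fun x => 2 * (k (x, t) ^ p + V2 (x, t)))
    (fun x => k (x, t) ^ (p + 1) * (V2 (x, t) + k (x, t) ^ p)) cg ((ck.pow (p + 1)).mul (c2.add cV))
    (fun θ => F.dV θ t ht)
  refine ⟨∫ x in (0:ℝ)..(2 * π), 2 * (k (x, t) ^ p + V2 (x, t)) *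
    (k (x, t) ^ (p + 1) * (V2 (x, t) + k (x, t) ^ p)), ?_, ?_⟩
  rotate_left
  · obtain ⟨C, C0, ε, e0, he, hC⟩ := lip_t T _ smV t ht
    obtain ⟨C', C0', ε', e0', he', hC'⟩ := lip_t T _ F.sm1 t ht
    refine (quad_deriv _ _ _ t (2 * π * C ^ 2 + 2 * π * C' ^ 2) hL ?_)
    filter_upwards [Metric.closedBall_mem_nhds t e0, Metric.closedBall_mem_nhds t e0'] with s hs hs1
    have hs' := Ioo_subset_Ico_self (he hs)
    have cVs : Continuous fun x => k (x, s) ^ p := (F.kc s hs').pow p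
    have c1s := F.V1c s (he hs)
    have ib := ibp (fun x => k (x, s) ^ p) (fun x => V1 (x, t)) _ _ (fun x => F.d1 x s (he hs))
      (fun x => F.d2 x t ht) c1s c2 (by simp only [F.perk]) (F.per1 t ht)
    have ib0 := ibp (fun x => k (x, t) ^ p) (fun x => V1 (x, t)) _ _ (fun x => F.d1 x t ht)
      (fun x => F.d2 x t ht) c1 c2 (by simp only [F.perk]) (F.per1 t ht)
    have sqb : ∀ M : ℝ, ∀ u : ℝ → ℝ, (∀ x ∈ Icc (0:ℝ) (2 * π), |u x| ≤ M * |s - t|) →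
        |∫ x in (0:ℝ)..(2 * π), u x ^ 2| ≤ 2 * π * M ^ 2 * |s - t| ^ 2 := by
      intro M u hu
      have := intervalIntegral.norm_integral_le_of_norm_le_const (a := 0) (b := 2 * π)
        (C := (M * |s - t|) ^ 2) (f := fun x => u x ^ 2) (by
          intro y hy
          rw [uIoc_of_le two_pi_pos.le] at hy
          rw [norm_pow]
          exact pow_le_pow_left₀ (abs_nonneg _) (hu y (Ioc_subset_Icc_self hy)) 2)
      rw [norm_eq_abs, sub_zero, abs_of_pos two_pi_pos] at this
      refine this.trans (le_of_eq ?_)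
      ring
    have q1 := sqb C (fun x => k (x, s) ^ p - k (x, t) ^ p) fun x hx =>
      hC x hx s hs t (Metric.mem_closedBall_self e0.le)
    have q2 := sqb C' (fun x => V1 (x, s) - V1 (x, t)) fun x hx =>
      hC' x hx s hs1 t (Metric.mem_closedBall_self e0'.le)
    have ex : ∀ u v : ℝ → ℝ, Continuous u → Continuous v → ∫ x in (0:ℝ)..(2 * π), (u x - v x) ^ 2 =
        (∫ x in (0:ℝ)..(2 * π), u x ^ 2) - 2 * (∫ x in (0:ℝ)..(2 * π), u x * v x)
          + ∫ x in (0:ℝ)..(2 * π), v x ^ 2 := by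
      intro u v hu hv
      rw [← intervalIntegral.integral_const_mul, ← intervalIntegral.integral_sub
        (Continuous.intervalIntegrable (by fun_prop) _ _) (Continuous.intervalIntegrable (by fun_prop) _ _),
        ← intervalIntegral.integral_add
        (Continuous.intervalIntegrable (by fun_prop) _ _) (Continuous.intervalIntegrable (by fun_prop) _ _)]
      congr 1
      ext x
      ring
    have lin : ∀ u : ℝ → ℝ, Continuous u → ∫ x in (0:ℝ)..(2 * π), 2 * (k (x, t) ^ p + V2 (x, t)) * u x =
        2 * (∫ x in (0:ℝ)..(2 * π), u x * k (x, t) ^ p) + 2 * ∫ x in (0:ℝ)..(2 * π), u x * V2 (x, t) := by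
      intro u hu
      have j1 : IntervalIntegrable (fun x => 2 * (u x * k (x, t) ^ p)) volume 0 (2 * π) :=
        (continuous_const.mul (hu.mul cV)).intervalIntegrable _ _
      have j2 : IntervalIntegrable (fun x => 2 * (u x * V2 (x, t))) volume 0 (2 * π) :=
        (continuous_const.mul (hu.mul c2)).intervalIntegrable _ _
      rw [← intervalIntegral.integral_const_mul, ← intervalIntegral.integral_const_mul,
        ← intervalIntegral.integral_add j1 j2]
      congr 1
      ext x
      ring
    rw [ex _ _ cVs cV] at q1
    rw [ex _ _ c1s c1] at q2
    rw [lin _ cVs, lin _ cV, ib, ib0]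
    have sqe : ∀ u : ℝ → ℝ, ∫ x in (0:ℝ)..(2 * π), u x ^ 2 = ∫ x in (0:ℝ)..(2 * π), u x * u x := by
      intro u; simp_rw [pow_two]
    have e1 := sqe fun x => k (x, t) ^ p
    have e2 := sqe fun x => V1 (x, t)
    rw [← e1, ← e2]
    rw [abs_le] at q1 q2 ⊢
    constructor <;> nlinarith
  · apply intervalIntegral.integral_nonneg two_pi_pos.le
    intro x _
    have : 0 ≤ k (x, t) ^ (p + 1) := (pow_pos (F.pos x t ht') _).le
    have h2 : 2 * (k (x, t) ^ p + V2 (x, t)) * (k (x, t) ^ (p + 1) * (V2 (x, t) + k (x, t) ^ p))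
      = 2 * (k (x, t) ^ (p + 1) * (V2 (x, t) + k (x, t) ^ p) ^ 2) := by ring
    rw [h2]
    positivity

end PFlow

lemma barrier (φ : ℝ → ℝ) (T c : ℝ) (hc : ContinuousOn φ (Ico 0 T)) (h0 : φ 0 < c)
    (hd : ∀ t ∈ Ioo 0 T, φ t < c → ∃ d ≤ 0, HasDerivAt φ d t) : ∀ t ∈ Ico 0 T, φ t < c := by
  intro t1 ht1
  by_contra! hcon
  have sub : Icc 0 t1 ⊆ Ico 0 T := fun x hx => ⟨hx.1, hx.2.trans_lt ht1.2⟩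
  have hcl : IsCompact (Icc 0 t1 ∩ φ ⁻¹' Ici c) :=
    isCompact_Icc.of_isClosed_subset ((hc.mono sub).preimage_isClosed_of_isClosed isClosed_Icc isClosed_Ici)
      inter_subset_left
  obtain ⟨a, ⟨⟨a0, a1⟩, ac⟩, amin⟩ := hcl.exists_isLeast ⟨t1, ⟨ht1.1, le_rfl⟩, hcon⟩
  have lt : ∀ t ∈ Ioo 0 a, φ t < c := by
    intro t ht
    by_contra! h
    exact absurd (amin ⟨⟨ht.1.le, ht.2.le.trans a1⟩, h⟩) (not_le.2 ht.2)
  have mem : ∀ t ∈ Ioo 0 a, t ∈ Ioo 0 T := fun t ht => ⟨ht.1, ht.2.trans_le (a1.trans ht1.2.le)⟩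
  have anti : AntitoneOn φ (Icc 0 a) := by
    apply antitoneOn_of_deriv_nonpos (convex_Icc _ _)
      (hc.mono fun x hx => sub ⟨hx.1, hx.2.trans a1⟩)
    · rw [interior_Icc]
      intro t ht
      obtain ⟨d, _, h⟩ := hd t (mem t ht) (lt t ht)
      exact h.differentiableAt.differentiableWithinAt
    · rw [interior_Icc]
      intro t ht
      obtain ⟨d, hd0, h⟩ := hd t (mem t ht) (lt t ht)
      rw [h.deriv]; exact hd0
  have := anti ⟨le_rfl, a0⟩ ⟨a0, le_rfl⟩ a0
  have ac' : c ≤ φ a := ac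
  linarith

namespace PFlow

variable {p : ℕ} {T : ℝ} {k V1 V2 : ℝ × ℝ → ℝ}

lemma joint (F : PFlow p T k V1 V2) : Continuous fun q : Ico (0:ℝ) T × ℝ => k (q.2, q.1) :=
  F.cont.comp_continuous (f := fun q : Ico (0:ℝ) T × ℝ => (q.2, (q.1:ℝ))) (by fun_prop)
    (fun q => ⟨mem_univ _, q.1.2⟩)

lemma jointr (F : PFlow p T k V1 V2) : Continuous fun q : Ico (0:ℝ) T × ℝ => (k (q.2, q.1))⁻¹ :=
  F.joint.inv₀ fun q => (F.pos _ _ q.1.2).ne'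

lemma K_cont (F : PFlow p T k V1 V2) : ContinuousOn (fun t => Rm fun x => k (x, t)) (Ico 0 T) := by
  rw [continuousOn_iff_continuous_domRestrict]
  exact (intervalIntegral.continuous_parametric_intervalIntegral_of_continuous'
    (f := fun (t : Ico (0:ℝ) T) x => k (x, t)) F.joint 0 (2 * π)).div_const _

lemma r_cont (F : PFlow p T k V1 V2) : ContinuousOn (fun t => Rm fun x => (k (x, t))⁻¹) (Ico 0 T) := by
  rw [continuousOn_iff_continuous_domRestrict]
  exact (intervalIntegral.continuous_parametric_intervalIntegral_of_continuous'
    (f := fun (t : Ico (0:ℝ) T) x => (k (x, t))⁻¹) F.jointr 0 (2 * π)).div_const _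

lemma B_cont (F : PFlow p T k V1 V2) : ContinuousOn
    (fun s => ∫ x in (0:ℝ)..(2 * π), hsup (fun y => (k (y, s))⁻¹) x * (k (x, s))⁻¹) (Ico 0 T) := by
  rw [continuousOn_iff_continuous_domRestrict]
  refine (intervalIntegral.continuous_parametric_intervalIntegral_of_continuous'
    (f := fun (s : Ico (0:ℝ) T) x => hsup (fun y => (k (y, s))⁻¹) x * (k (x, s))⁻¹) ?_ 0 (2 * π))
  refine Continuous.mul ?_ F.jointr
  have j := F.jointr
  have h1 := intervalIntegral.continuous_parametric_primitive_of_continuous (μ := volume) (a₀ := 0)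
    (f := fun (s : Ico (0:ℝ) T) x => cos x * (k (x, s))⁻¹)
    ((continuous_cos.comp continuous_snd).mul j)
  have h2 := intervalIntegral.continuous_parametric_primitive_of_continuous (μ := volume) (a₀ := 0)
    (f := fun (s : Ico (0:ℝ) T) x => sin x * (k (x, s))⁻¹)
    ((continuous_sin.comp continuous_snd).mul j)
  exact ((continuous_sin.comp continuous_snd).mul h1).sub ((continuous_cos.comp continuous_snd).mul h2)

lemma rmpos (F : PFlow p T k V1 V2) (t : ℝ) (ht : t ∈ Ico 0 T) : 0 < Rm fun x => (k (x, t))⁻¹ :=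
  Rm_pos _ (F.rc t ht) (F.rpos t ht)

lemma preserve (F : PFlow p T k V1 V2)
    (h0 : 2 * 10 ^ 12 * En (fun x => (k (x, 0))⁻¹) ≤ Rm (fun x => (k (x, 0))⁻¹) ^ 2)
    (t : ℝ) (ht : t ∈ Ico 0 T) :
    10 ^ 12 * En (fun x => (k (x, t))⁻¹) ≤ Rm (fun x => (k (x, t))⁻¹) ^ 2 := by
  set r : ℝ → ℝ := fun t => Rm fun x => (k (x, t))⁻¹ with hr
  set b : ℝ → ℝ := fun s => (∫ x in (0:ℝ)..(2 * π), hsup (fun y => (k (y, s))⁻¹) x * (k (x, s))⁻¹) / (2 * π) with hb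
  have hE : ∀ t, En (fun x => (k (x, t))⁻¹) = r t ^ 2 - b t := fun t => rfl
  have rp : ∀ t ∈ Ico 0 T, 0 < r t := F.rmpos
  have key := barrier (fun t => - (b t / r t ^ 2)) T (-(1 - 1 / 10 ^ 12))
    (((F.B_cont.div_const _).div (F.r_cont.pow 2) fun t ht => (pow_pos (rp t ht) 2).ne').neg) ?_ ?_ t ht
  · have h1 := rp t ht
    rw [hE]
    rw [neg_lt_neg_iff, lt_div_iff₀ (by positivity)] at key
    change 10 ^ 12 * (r t ^ 2 - b t) ≤ r t ^ 2
    linarith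
  · have h1 := rp 0 ⟨le_rfl, F.hT⟩
    rw [hE] at h0
    change 2 * 10 ^ 12 * (r 0 ^ 2 - b 0) ≤ r 0 ^ 2 at h0
    rw [neg_lt_neg_iff, lt_div_iff₀ (by positivity)]
    have : 0 < r 0 ^ 2 := by positivity
    linarith
  · intro t ht hlt
    have ht' := Ioo_subset_Ico_self ht
    have h1 := rp t ht'
    have dr : HasDerivAt r _ t := F.r_deriv t ht
    have db : HasDerivAt b _ t := (F.B_deriv t ht).div_const (2 * π)
    refine ⟨_, ?_, (db.div (dr.pow 2) (pow_pos h1 2).ne').neg⟩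
    rw [neg_lt_neg_iff, lt_div_iff₀ (by positivity)] at hlt
    have g := gage _ (F.rc t ht') (F.rpos t ht') (F.c1 t ht') (F.c2 t ht') (by
      rw [hE]
      change 1200 * (r t ^ 2 - b t) ≤ r t ^ 2
      nlinarith) h1
    have ch := cheb _ (F.kc t ht') (fun x => F.pos x t ht') (p - 1)
    have pp : p - 1 + 1 = p := by have := F.hp; omega
    rw [pp] at ch
    rw [hE] at g
    simp only [inv_inv] at g
    change r t ≤ (r t ^ 2 - (r t ^ 2 - b t)) * Rm (fun x => k (x, t)) at g
    rw [sub_sub_cancel] at g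
    have m0 : 0 < Rm fun x => k (x, t) ^ (p - 1) :=
      Rm_pos _ ((F.kc t ht').pow _) fun x => pow_pos (F.pos x t ht') _
    have em : (∫ x in (0:ℝ)..(2 * π), k (x, t) ^ (p - 1)) / (2 * π) = Rm fun x => k (x, t) ^ (p - 1) := rfl
    rw [mul_div_assoc, em]
    set m := Rm fun x => k (x, t) ^ (p - 1)
    set v := Rm fun x => k (x, t) ^ p
    set K := Rm fun x => k (x, t)
    have b0 : 0 < b t := by nlinarith [sq_nonneg (r t), pow_pos h1 2]
    have fin : r t * m ≤ b t * v := by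
      calc r t * m ≤ b t * K * m := by gcongr
        _ = b t * (K * m) := by ring
        _ ≤ b t * v := by gcongr
    have hp0 : (0:ℝ) < p := by exact_mod_cast F.hp
    have : -((-(2 / (p:ℝ)) * m * r t ^ 2 - b t * (((2:ℕ):ℝ) * r t ^ (2 - 1) * (-(1 / (p:ℝ)) * v))) / (r t ^ 2) ^ 2)
        = - (2 / (p:ℝ) * r t * (b t * v - r t * m) / (r t ^ 2) ^ 2) := by
      push_cast
      ring
    refine le_of_eq_of_le this ?_
    have : 0 ≤ b t * v - r t * m := by linarith
    have : 0 ≤ (2 / (p:ℝ) * r t * (b t * v - r t * m) / (r t ^ 2) ^ 2) := by positivity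
    linarith

end PFlow

namespace PFlow

variable {p : ℕ} {T : ℝ} {k V1 V2 : ℝ × ℝ → ℝ}

lemma r_anti (F : PFlow p T k V1 V2) : AntitoneOn (fun t => Rm fun x => (k (x, t))⁻¹) (Ico 0 T) := by
  apply antitoneOn_of_deriv_nonpos (convex_Ico _ _) F.r_cont
  · rw [interior_Ico]
    exact fun t ht => (F.r_deriv t ht).differentiableAt.differentiableWithinAt
  · rw [interior_Ico]
    intro t ht
    rw [(F.r_deriv t ht).deriv]
    have : 0 ≤ Rm fun x => k (x, t) ^ p :=
      Rm_nonneg _ fun x => (pow_pos (F.pos x t (Ioo_subset_Ico_self ht)) _).le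
    have h2 : 0 ≤ 1 / (p:ℝ) := by positivity
    nlinarith [mul_nonneg h2 this]

lemma G_mono (F : PFlow p T k V1 V2) : MonotoneOn (fun s => (∫ x in (0:ℝ)..(2 * π), (k (x, s) ^ p) ^ 2) -
      ∫ x in (0:ℝ)..(2 * π), V1 (x, s) ^ 2) (Ioo 0 T) := by
  have dif : ∀ t ∈ Ioo 0 T, DifferentiableAt ℝ (fun s => (∫ x in (0:ℝ)..(2 * π), (k (x, s) ^ p) ^ 2) -
      ∫ x in (0:ℝ)..(2 * π), V1 (x, s) ^ 2) t := fun t ht => by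
    obtain ⟨d, _, h⟩ := F.G_deriv t ht
    exact h.differentiableAt
  apply monotoneOn_of_deriv_nonneg (convex_Ioo _ _) fun t ht => (dif t ht).continuousAt.continuousWithinAt
  · rw [interior_Ioo]
    exact fun t ht => (dif t ht).differentiableWithinAt
  · rw [interior_Ioo]
    intro t ht
    obtain ⟨d, hd, h⟩ := F.G_deriv t ht
    rw [h.deriv]; exact hd

lemma kr_bound (F : PFlow p T k V1 V2)
    (hE : ∀ t ∈ Ico 0 T, 10 ^ 12 * En (fun x => (k (x, t))⁻¹) ≤ Rm (fun x => (k (x, t))⁻¹) ^ 2) :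
    ∃ C > (0:ℝ), ∀ t ∈ Ico (T / 2) T, ∀ x ∈ Icc (0:ℝ) (2 * π), k (x, t) * Rm (fun x => (k (x, t))⁻¹) ≤ C := by
  have hT := F.hT
  have h0 : T / 2 ∈ Ioo 0 T := ⟨by linarith, by linarith⟩
  set D := - ((∫ x in (0:ℝ)..(2 * π), (k (x, T / 2) ^ p) ^ 2) - ∫ x in (0:ℝ)..(2 * π), V1 (x, T / 2) ^ 2) with hD
  have r0 := F.rmpos (T / 2) (Ioo_subset_Ico_self h0)
  refine ⟨4 + (1 + |D|) * Rm (fun x => (k (x, T / 2))⁻¹), by positivity, ?_⟩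
  intro t ht x hx
  have t1 : t ∈ Ioo 0 T := ⟨by linarith [ht.1], ht.2⟩
  have t2 := Ioo_subset_Ico_self t1
  obtain ⟨x0, hx0, hm⟩ := isCompact_Icc.exists_isMaxOn ⟨x, hx⟩ (F.kc t t2).continuousOn
  have hm' : ∀ y ∈ Icc (0:ℝ) (2 * π), k (y, t) ≤ k (x0, t) := fun y hy => hm hy
  have rt := F.rmpos t t2
  have rle := F.r_anti (Ioo_subset_Ico_self h0) t2 ht.1
  simp only at rle
  have k0 := F.pos x0 t t2
  have G := F.G_mono h0 t1 ht.1
  simp only at G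
  have pos0 : 0 < (1 + |D|) * Rm (fun x => (k (x, T / 2))⁻¹) := by positivity
  refine (mul_le_mul_of_nonneg_right (hm' x hx) rt.le).trans ?_
  by_cases hc : D ≤ (k (x0, t) ^ p) ^ 2
  · have := kbound p F.hp _ (F.rc t t2) (F.rpos t t2) (F.c1 t t2) (F.c2 t t2) (hE t t2)
      (fun x => k (x, t) ^ p) (fun x => V1 (x, t)) (fun x => F.d1 x t t1) (F.V1c t t1)
      (fun x => by rw [inv_inv]) D x0 hx0
      (fun y hy => pow_le_pow_left₀ (F.pos y t t2).le (hm' y hy) p) (by linarith) hc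
    have h3 : k (x0, t) * Rm (fun x => (k (x, t))⁻¹) ≤ 4 := by
      calc _ ≤ k (x0, t) * (4 * (k (x0, t))⁻¹) := by gcongr
        _ = 4 := by field_simp
    linarith
  · push Not at hc
    have h4 : k (x0, t) ≤ 1 + |D| := by
      by_cases h1 : k (x0, t) ≤ 1
      · linarith [abs_nonneg D]
      · push Not at h1
        have := le_self_pow₀ h1.le (n := p * 2) (by have := F.hp; omega)
        rw [pow_mul] at this
        linarith [le_abs_self D]
    have : k (x0, t) * Rm (fun x => (k (x, t))⁻¹) ≤ (1 + |D|) * Rm (fun x => (k (x, T / 2))⁻¹) := by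
      gcongr
    linarith

lemma final (F : PFlow p T k V1 V2)
    (hE : ∀ t ∈ Ico 0 T, 10 ^ 12 * En (fun x => (k (x, t))⁻¹) ≤ Rm (fun x => (k (x, t))⁻¹) ^ 2) :
    ∃ c > (0:ℝ), ∃ c' > (0:ℝ), ∀ t : ℝ, 0 ≤ t → t < T →
        c / (T - t) ≤ (Rm fun x => k (x, t)) ^ (p + 1) ∧
        (Rm fun x => k (x, t)) ^ (p + 1) ≤ c' / (T - t) := by
  have hT := F.hT
  obtain ⟨C, C0, hC⟩ := F.kr_bound hE
  set r : ℝ → ℝ := fun t => Rm fun x => (k (x, t))⁻¹ with hr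
  set K : ℝ → ℝ := fun t => Rm fun x => k (x, t) with hK
  have rp : ∀ t ∈ Ico 0 T, 0 < r t := F.rmpos
  have Kp : ∀ t ∈ Ico 0 T, 0 < K t := fun t ht => Rm_pos _ (F.kc t ht) fun x => F.pos x t ht
  have sub : Ico (T / 2) T ⊆ Ico 0 T := fun t ht => ⟨by linarith [ht.1], ht.2⟩
  have sub' : Ico (T / 2) T ⊆ Ioo 0 T := fun t ht => ⟨by linarith [ht.1], ht.2⟩
  have rK1 : ∀ t ∈ Ico 0 T, 1 ≤ r t * K t := by
    intro t ht
    have := harm _ (F.rc t ht) (F.rpos t ht)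
    simpa only [inv_inv] using this
  have rK2 : ∀ t ∈ Ico (T / 2) T, r t * K t ≤ C := by
    intro t ht
    rw [hK]
    simp only
    rw [← Rm_const_mul, ← Rm_const C]
    exact Rm_mono _ _ (continuous_const.mul (F.kc t (sub ht))) continuous_const fun x hx => by
      rw [mul_comm]; exact hC t ht x hx
  -- power derivative
  set a : ℝ := ((p:ℝ) + 1) / p with ha
  have hp0 : (0:ℝ) < p := by exact_mod_cast F.hp
  have a0 : 0 < a := by positivity
  have v1 : ∀ t ∈ Ico 0 T, 1 ≤ r t ^ p * Rm fun x => k (x, t) ^ p := by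
    intro t ht
    have j := jensen _ (F.kc t ht) (fun x => F.pos x t ht) p
    calc (1:ℝ) ≤ (r t * K t) ^ p := one_le_pow₀ (rK1 t ht)
      _ = r t ^ p * K t ^ p := mul_pow _ _ _
      _ ≤ _ := mul_le_mul_of_nonneg_left j (pow_pos (rp t ht) _).le
  have v2 : ∀ t ∈ Ico (T / 2) T, (r t ^ p * Rm fun x => k (x, t) ^ p) ≤ C ^ p := by
    intro t ht
    rw [← Rm_const_mul, ← Rm_const (C ^ p)]
    refine Rm_mono _ _ (continuous_const.mul ((F.kc t (sub ht)).pow p)) continuous_const fun x hx => ?_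
    rw [← mul_pow, mul_comm]
    exact pow_le_pow_left₀ (mul_pos (F.pos x t (sub ht)) (rp t (sub ht))).le (hC t ht x hx) p
  have dq : ∀ t ∈ Ioo 0 T, HasDerivAt (fun t => r t ^ (p + 1)) (-(a * (r t ^ p * Rm fun x => k (x, t) ^ p))) t := by
    intro t ht
    have h1 : HasDerivAt r _ t := F.r_deriv t ht
    refine (h1.pow (p + 1)).congr_deriv ?_
    rw [ha, Nat.add_sub_cancel]
    push_cast
    ring
  have cq : ContinuousOn (fun t => r t ^ (p + 1)) (Ico (T / 2) T) := (F.r_cont.mono sub).pow _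
  have int : interior (Ico (T / 2) T) ⊆ Ioo 0 T := interior_subset.trans sub'
  have m1 : AntitoneOn (fun t => r t ^ (p + 1) + a * t) (Ico (T / 2) T) := by
    have hd : ∀ t ∈ Ioo 0 T, HasDerivAt (fun t => r t ^ (p + 1) + a * t)
        (-(a * (r t ^ p * Rm fun x => k (x, t) ^ p)) + a * 1) t := fun t ht =>
      (dq t ht).add ((hasDerivAt_id t).const_mul a)
    apply antitoneOn_of_deriv_nonpos (convex_Ico _ _) (cq.add (by fun_prop))
    · exact fun t ht => (hd t (int ht)).differentiableAt.differentiableWithinAt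
    · intro t ht
      refine le_of_eq_of_le (hd t (int ht)).deriv ?_
      nlinarith [v1 t (sub (interior_subset ht))]
  have m2 : MonotoneOn (fun t => r t ^ (p + 1) + a * C ^ p * t) (Ico (T / 2) T) := by
    have hd : ∀ t ∈ Ioo 0 T, HasDerivAt (fun t => r t ^ (p + 1) + a * C ^ p * t)
        (-(a * (r t ^ p * Rm fun x => k (x, t) ^ p)) + a * C ^ p * 1) t := fun t ht =>
      (dq t ht).add ((hasDerivAt_id t).const_mul _)
    apply monotoneOn_of_deriv_nonneg (convex_Ico _ _) (cq.add (by fun_prop))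
    · exact fun t ht => (hd t (int ht)).differentiableAt.differentiableWithinAt
    · intro t ht
      refine le_of_le_of_eq ?_ (hd t (int ht)).deriv.symm
      nlinarith [v2 t (interior_subset ht)]
  -- limit
  have ev : ∀ᶠ t in nhdsWithin T (Iio T), t ∈ Ico (T / 2) T :=
    Ico_mem_nhdsLT (by linarith)
  have lim : Tendsto r (nhdsWithin T (Iio T)) (nhds 0) := by
    have h1 : Tendsto (fun t => C / (⨆ θ : Icc (0:ℝ) (2 * π), k ((θ : ℝ), t))) (nhdsWithin T (Iio T)) (nhds 0) :=
      tendsto_const_nhds.div_atTop F.blow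
    refine tendsto_of_tendsto_of_tendsto_of_le_of_le' tendsto_const_nhds h1 ?_ ?_
    · filter_upwards [ev] with t ht
      exact (rp t (sub ht)).le
    · filter_upwards [ev, F.blow.eventually_gt_atTop 0] with t ht hs
      have hne : Nonempty (Icc (0:ℝ) (2 * π)) := ⟨⟨0, le_rfl, two_pi_pos.le⟩⟩
      have hrt := rp t (sub ht)
      have : (⨆ θ : Icc (0:ℝ) (2 * π), k ((θ : ℝ), t)) ≤ C / r t := by
        apply ciSup_le
        intro x
        rw [le_div_iff₀ hrt]
        exact hC t ht x x.2
      rw [le_div_iff₀ hs]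
      rw [le_div_iff₀ hrt] at this
      linarith
  have limq : Tendsto (fun t => r t ^ (p + 1)) (nhdsWithin T (Iio T)) (nhds 0) := by
    have := lim.pow (p + 1)
    simpa using this
  have idT : ∀ c : ℝ, Tendsto (fun t : ℝ => c * t) (nhdsWithin T (Iio T)) (nhds (c * T)) := fun c =>
    ((continuous_const.mul continuous_id).tendsto T).mono_left nhdsWithin_le_nhds
  have q1 : ∀ t ∈ Ico (T / 2) T, a * (T - t) ≤ r t ^ (p + 1) := by
    intro t ht
    have : 0 + a * T ≤ r t ^ (p + 1) + a * t := by
      refine le_of_tendsto (limq.add (idT a)) ?_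
      filter_upwards [ev, Ioo_mem_nhdsLT ht.2] with s hs hs2
      exact m1 ht hs hs2.1.le
    linarith
  have q2 : ∀ t ∈ Ico (T / 2) T, r t ^ (p + 1) ≤ a * C ^ p * (T - t) := by
    intro t ht
    have : r t ^ (p + 1) + a * C ^ p * t ≤ 0 + a * C ^ p * T := by
      refine ge_of_tendsto (limq.add (idT (a * C ^ p))) ?_
      filter_upwards [ev, Ioo_mem_nhdsLT ht.2] with s hs hs2
      exact m2 ht hs hs2.1.le
    linarith
  -- compact part
  have cc : ContinuousOn (fun t => K t ^ (p + 1) * (T - t)) (Icc 0 (T / 2)) :=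
    ((F.K_cont.mono fun t ht => ⟨ht.1, by linarith [ht.2]⟩).pow _).mul (by fun_prop)
  have ne : (Icc 0 (T / 2)).Nonempty := ⟨0, le_rfl, by linarith⟩
  have ps : ∀ t ∈ Icc 0 (T / 2), 0 < K t ^ (p + 1) * (T - t) := fun t ht =>
    mul_pos (pow_pos (Kp t ⟨ht.1, by linarith [ht.2]⟩) _) (by linarith [ht.2])
  obtain ⟨x1, hx1, mn⟩ := isCompact_Icc.exists_isMinOn ne cc
  obtain ⟨x2, hx2, mx⟩ := isCompact_Icc.exists_isMaxOn ne cc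
  refine ⟨min (K x1 ^ (p + 1) * (T - x1)) (1 / (a * C ^ p)), lt_min (ps x1 hx1) (by positivity),
    max (K x2 ^ (p + 1) * (T - x2)) (C ^ (p + 1) / a), lt_max_of_lt_left (ps x2 hx2), ?_⟩
  intro t t0 tT
  have Tt : 0 < T - t := by linarith
  rw [div_le_iff₀ Tt, le_div_iff₀ Tt]
  by_cases hc : t ≤ T / 2
  · exact ⟨(min_le_left _ _).trans (mn ⟨t0, hc⟩), le_trans (mx ⟨t0, hc⟩) (le_max_left _ _)⟩
  · push Not at hc
    have ht : t ∈ Ico (T / 2) T := ⟨hc.le, tT⟩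
    have ht' : t ∈ Ico 0 T := sub ht
    have u1 : 1 ≤ r t ^ (p + 1) * K t ^ (p + 1) := by
      rw [← mul_pow]; exact one_le_pow₀ (rK1 t ht')
    have u2 : r t ^ (p + 1) * K t ^ (p + 1) ≤ C ^ (p + 1) := by
      rw [← mul_pow]
      exact pow_le_pow_left₀ (mul_pos (rp t ht') (Kp t ht')).le (rK2 t ht) _
    have kp : 0 < K t ^ (p + 1) := pow_pos (Kp t ht') _
    have w1 := mul_le_mul_of_nonneg_right (q1 t ht) kp.le
    have w2 := mul_le_mul_of_nonneg_right (q2 t ht) kp.le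
    constructor
    · refine (min_le_right _ _).trans ?_
      rw [div_le_iff₀ (by positivity)]
      change 1 ≤ K t ^ (p + 1) * (T - t) * (a * C ^ p)
      linarith
    · refine le_trans ?_ (le_max_right _ _)
      rw [le_div_iff₀ a0]
      change K t ^ (p + 1) * (T - t) * a ≤ C ^ (p + 1)
      linarith

end PFlow

/-- **Blow-up Lemma.** There is `c_p > 0` depending only on `p` such that if
`ψ̂(0) ≥ c_p ‖ψ‖₂`, then there are `c, c' > 0` with
`c/(T-t) ≤ k̂(0,t)^{p+1} ≤ c'/(T-t)` for all `t ∈ [0,T)`. -/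
theorem statement7 (p : ℕ) (hp : 1 ≤ p) :
    ∃ cp > (0:ℝ), ∀ (T : ℝ), 0 < T → ∀ (k : ℝ → ℝ → ℝ) (ψ : ℝ → ℝ),
      IsPCSF p T k ψ →
      cp * seminorm2 ψ ≤ (fCoeff ψ 0).re →
      ∃ c > (0:ℝ), ∃ c' > (0:ℝ), ∀ t : ℝ, 0 ≤ t → t < T →
        c / (T - t) ≤ ((fCoeff (fun θ => k θ t) 0).re) ^ (p + 1) ∧
        ((fCoeff (fun θ => k θ t) 0).re) ^ (p + 1) ≤ c' / (T - t) := by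
  obtain ⟨cp, cp0, hcp⟩ := init_close
  refine ⟨cp, cp0, fun T hT k ψ h hψ => ?_⟩
  obtain ⟨V1, V2, F⟩ := toFlow p hp T hT k ψ h
  obtain ⟨-, -, -, -, h0, sψ, pψ, perψ, -, -⟩ := h
  have z : (0:ℝ) ∈ Ico 0 T := ⟨le_rfl, hT⟩
  have c1 := F.c1 0 z
  have c2 := F.c2 0 z
  have e0 : ∀ x, k x 0 = ψ x := h0
  simp only [e0] at c1 c2
  have hi := hcp ψ sψ pψ perψ hψ c1 c2
  have := F.final (F.preserve (by simp only [e0]; exact hi))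
  simpa only [fCoeff_zero_re] using this
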